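/- arXiv:1703.10989 — 2 statements merged into one kernel-verified Lean document; each statement's English description precedes it below -/
import Mathlib

section
/- There exists a constant C > 0 (depending only on d and ŵ) such that for every integer N ≥ 2, every λ with 0 < λ ≤ 2/N, and every admissible Ψ that minimizes the energy, i.e. ℰ_{λ,N}(Ψ) = E(λ,N), one has ⟨𝒩₊⟩_Ψ ≤ C and ⟨𝒩₊²⟩_Ψ ≤ C. -/
open MeasureTheory Real

noncomputable section

/-- The unit cube `[0,1]^{dN}` in the configuration space of `N` particles in `ℝ^d`. -/
def cube (d N : ℕ) : Set (Fin N → Fin d → ℝ) :=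
  Set.univ.pi fun _ => Set.univ.pi fun _ => Set.Icc (0 : ℝ) 1

/-- The unit cube `[0,1]^d` in `ℝ^d`. -/
def cube1 (d : ℕ) : Set (Fin d → ℝ) :=
  Set.univ.pi fun _ => Set.Icc (0 : ℝ) 1

/-- `Ψ` is admissible: smooth, `ℤ^d`-periodic in each particle variable, symmetric under
permutations of the particles, and `L²`-normalized on the unit cube. -/
def IsAdmissible (d N : ℕ) (Ψ : (Fin N → Fin d → ℝ) → ℂ) : Prop :=
  ContDiff ℝ (⊤ : ℕ∞) Ψ ∧
  (∀ (x : Fin N → Fin d → ℝ) (j : Fin N) (v : Fin d → ℤ),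
      Ψ (Function.update x j (x j + fun i => (v i : ℝ))) = Ψ x) ∧
  (∀ (σ : Equiv.Perm (Fin N)) (x : Fin N → Fin d → ℝ), Ψ (x ∘ σ) = Ψ x) ∧
  (∫ x in cube d N, ‖Ψ x‖ ^ 2) = 1

/-- The energy `ℰ_{λ,N}(Ψ)` of a wave function `Ψ`. -/
def energy (d N : ℕ) (lam : ℝ) (w : (Fin d → ℝ) → ℝ)
    (Ψ : (Fin N → Fin d → ℝ) → ℂ) : ℝ :=
  ∫ x in cube d N,
    ((∑ j : Fin N, ∑ i : Fin d, ‖fderiv ℝ Ψ x (Pi.single j (Pi.single i 1))‖ ^ 2) +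
      lam * (∑ j : Fin N, ∑ k : Fin N, if j < k then w (x j - x k) else 0) * ‖Ψ x‖ ^ 2)

/-- The ground state energy `E(λ,N)`. -/
def GSE (d N : ℕ) (lam : ℝ) (w : (Fin d → ℝ) → ℝ) : ℝ :=
  sInf {e | ∃ Ψ, IsAdmissible d N Ψ ∧ energy d N lam w Ψ = e}

/-- The interaction potential defined by the absolutely convergent Fourier series
`w(x) = ∑_{p ∈ (2πℤ)^d} ŵ(p) e^{ip·x}`, with the lattice point `p = 2πk` indexed by
`k ∈ ℤ^d`. -/
def wOf (d : ℕ) (hw : (Fin d → ℤ) → ℝ) (x : Fin d → ℝ) : ℝ :=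
  (∑' k : Fin d → ℤ,
    (hw k : ℂ) * Complex.exp (Complex.I * ((∑ i, (2 * π * (k i : ℝ)) * x i : ℝ) : ℂ))).re

/-- `|p|²` for the lattice point `p = 2πk`. -/
def pSq (d : ℕ) (k : Fin d → ℤ) : ℝ := ∑ i, (2 * π * (k i : ℝ)) ^ 2

/-- The elementary excitation energy `e_p = √(|p|⁴ + 2|p|²ŵ(p))`. -/
def ePk (d : ℕ) (hw : (Fin d → ℤ) → ℝ) (k : Fin d → ℤ) : ℝ :=
  Real.sqrt (pSq d k ^ 2 + 2 * pSq d k * hw k)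

/-- The Bogoliubov coefficient `α_p = ŵ(p)/(|p|² + ŵ(p) + e_p)`. -/
def alphaP (d : ℕ) (hw : (Fin d → ℤ) → ℝ) (k : Fin d → ℤ) : ℝ :=
  hw k / (pSq d k + hw k + ePk d hw k)

/-- The Bogoliubov ground state energy
`e_B = -(1/2) ∑_{p ≠ 0} (|p|² + ŵ(p) - e_p)`. -/
def eB (d : ℕ) (hw : (Fin d → ℤ) → ℝ) : ℝ :=
  -(1 / 2) * ∑' k : {k : Fin d → ℤ // k ≠ 0}, (pSq d k.1 + hw k.1 - ePk d hw k.1)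

/-- The projection `Q_j` removing the condensate in the `j`-th variable. -/
def Qop (d N : ℕ) (j : Fin N) (Ψ : (Fin N → Fin d → ℝ) → ℂ) :
    (Fin N → Fin d → ℝ) → ℂ :=
  fun x => Ψ x - ∫ y in cube1 d, Ψ (Function.update x j y)

/-- The expected number of excited particles `⟨𝒩₊⟩_Ψ`. -/
def NplusExp (d N : ℕ) (Ψ : (Fin N → Fin d → ℝ) → ℂ) : ℝ :=
  ∑ j : Fin N, ∫ x in cube d N, ‖Qop d N j Ψ x‖ ^ 2

/-- The second moment `⟨𝒩₊²⟩_Ψ` of the number of excited particles. -/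
def NplusSqExp (d N : ℕ) (Ψ : (Fin N → Fin d → ℝ) → ℂ) : ℝ :=
  ∑ j : Fin N, ∑ k : Fin N, ∫ x in cube d N, ‖Qop d N j (Qop d N k Ψ) x‖ ^ 2

set_option linter.unusedSectionVars false

section generic

theorem mp_update {ι E : Type} [Fintype ι] [DecidableEq ι] [MeasurableSpace E] (ν : Measure E)
    [IsProbabilityMeasure ν] (j : ι) :
    MeasurePreserving (fun p : (ι → E) × E => Function.update p.1 j p.2)
      ((Measure.pi fun _ : ι => ν).prod ν) (Measure.pi fun _ : ι => ν) := by
  have hm : Measurable (fun p : (ι → E) × E => Function.update p.1 j p.2) := by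
    rw [measurable_pi_iff]
    intro i
    by_cases h : i = j
    · subst h; simpa using measurable_snd
    · simp only [Function.update_of_ne h]
      exact (measurable_pi_apply i).comp measurable_fst
  refine ⟨hm, ?_⟩
  symm
  apply Measure.pi_eq
  intro s hs
  rw [Measure.map_apply hm (MeasurableSet.univ_pi hs)]
  have : (fun p : (ι → E) × E => Function.update p.1 j p.2) ⁻¹' (Set.univ.pi s)
      = (Set.univ.pi (Function.update s j Set.univ)) ×ˢ (s j) := by
    ext ⟨x, y⟩
    simp only [Set.mem_preimage, Set.mem_pi, Set.mem_univ, true_imp_iff, Set.mem_prod]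
    constructor
    · intro h
      refine ⟨fun i => ?_, by simpa using h j⟩
      by_cases hi : i = j
      · subst hi; simp
      · have := h i
        simpa [Function.update_of_ne hi] using this
    · rintro ⟨h1, h2⟩ i
      by_cases hi : i = j
      · subst hi; simpa using h2
      · have := h1 i
        simpa [Function.update_of_ne hi] using this
  rw [this, Measure.prod_prod, Measure.pi_pi]
  rw [← Finset.mul_prod_erase Finset.univ (fun i => ν (s i)) (Finset.mem_univ j)]
  rw [← Finset.mul_prod_erase Finset.univ (fun i => ν (Function.update s j Set.univ i))
    (Finset.mem_univ j)]
  rw [Finset.prod_congr rfl (g := fun i => ν (s i))]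
  · simp [mul_comm]
  · intro i hi
    rw [Function.update_of_ne (Finset.ne_of_mem_erase hi)]

theorem mp_piecewise {ι E : Type} [Fintype ι] [DecidableEq ι] [MeasurableSpace E] (ν : Measure E)
    [IsProbabilityMeasure ν] (S : Finset ι) :
    MeasurePreserving (fun p : (ι → E) × (ι → E) => S.piecewise p.1 p.2)
      ((Measure.pi fun _ : ι => ν).prod (Measure.pi fun _ : ι => ν)) (Measure.pi fun _ : ι => ν) := by
  have hm : Measurable (fun p : (ι → E) × (ι → E) => S.piecewise p.1 p.2) := by
    rw [measurable_pi_iff]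
    intro i
    by_cases h : i ∈ S
    · simp only [Finset.piecewise_eq_of_mem _ _ _ h]
      exact (measurable_pi_apply i).comp measurable_fst
    · simp only [Finset.piecewise_eq_of_notMem _ _ _ h]
      exact (measurable_pi_apply i).comp measurable_snd
  refine ⟨hm, ?_⟩
  symm
  apply Measure.pi_eq
  intro s hs
  rw [Measure.map_apply hm (MeasurableSet.univ_pi hs)]
  have : (fun p : (ι → E) × (ι → E) => S.piecewise p.1 p.2) ⁻¹' (Set.univ.pi s)
      = (Set.univ.pi (S.piecewise s (fun _ => Set.univ))) ×ˢ
        (Set.univ.pi (S.piecewise (fun _ => Set.univ) s)) := by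
    ext ⟨x, y⟩
    simp only [Set.mem_preimage, Set.mem_pi, Set.mem_univ, true_imp_iff, Set.mem_prod]
    rw [← forall_and]
    refine forall_congr' fun i => ?_
    by_cases h : i ∈ S <;> simp [h]
  rw [this, Measure.prod_prod, Measure.pi_pi, Measure.pi_pi, ← Finset.prod_mul_distrib]
  refine Finset.prod_congr rfl fun i _ => ?_
  by_cases h : i ∈ S <;> simp [h]

end generic

section basics

variable {d N : ℕ} {F : Type} [NormedAddCommGroup F] [NormedSpace ℝ F]

theorem isCompact_cube1 (d : ℕ) : IsCompact (cube1 d) :=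
  isCompact_univ_pi fun _ => isCompact_Icc

theorem isCompact_cube (d N : ℕ) : IsCompact (cube d N) :=
  isCompact_univ_pi fun _ => isCompact_univ_pi fun _ => isCompact_Icc

instance prob_Icc : IsProbabilityMeasure (volume.restrict (Set.Icc (0 : ℝ) 1)) :=
  ⟨by simp⟩

theorem nu_eq (d : ℕ) : (volume.restrict (cube1 d) : Measure (Fin d → ℝ)) =
    Measure.pi (fun _ => volume.restrict (Set.Icc (0 : ℝ) 1)) := by
  rw [cube1, volume_pi, Measure.restrict_pi_pi]

instance prob_cube1 (d : ℕ) : IsProbabilityMeasure (volume.restrict (cube1 d)) := by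
  rw [nu_eq]; infer_instance

theorem mu_eq (d N : ℕ) : (volume.restrict (cube d N) : Measure (Fin N → Fin d → ℝ)) =
    Measure.pi (fun _ => volume.restrict (cube1 d)) := by
  rw [cube, volume_pi, Measure.restrict_pi_pi]
  rfl

instance prob_cube (d N : ℕ) : IsProbabilityMeasure (volume.restrict (cube d N)) := by
  rw [mu_eq]; infer_instance

theorem int_cube {f : (Fin N → Fin d → ℝ) → F} (hf : Continuous f) :
    Integrable f (volume.restrict (cube d N)) :=
  hf.continuousOn.integrableOn_compact (isCompact_cube d N)

theorem int_cube1 {f : (Fin d → ℝ) → F} (hf : Continuous f) :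
    Integrable f (volume.restrict (cube1 d)) :=
  hf.continuousOn.integrableOn_compact (isCompact_cube1 d)

theorem int_cube_prod {f : (Fin N → Fin d → ℝ) × (Fin d → ℝ) → F} (hf : Continuous f) :
    Integrable f ((volume.restrict (cube d N)).prod (volume.restrict (cube1 d))) := by
  rw [Measure.prod_restrict]
  exact hf.continuousOn.integrableOn_compact ((isCompact_cube d N).prod (isCompact_cube1 d))

theorem int_cube1_prod {f : (Fin d → ℝ) × (Fin d → ℝ) → F} (hf : Continuous f) :
    Integrable f ((volume.restrict (cube1 d)).prod (volume.restrict (cube1 d))) := by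
  rw [Measure.prod_restrict]
  exact hf.continuousOn.integrableOn_compact ((isCompact_cube1 d).prod (isCompact_cube1 d))

/-- Averaging over the `j`-th particle. -/
def Pop (j : Fin N) (f : (Fin N → Fin d → ℝ) → F) : (Fin N → Fin d → ℝ) → F :=
  fun x => ∫ y in cube1 d, f (Function.update x j y)

theorem cont_upd (j : Fin N) :
    Continuous fun p : (Fin N → Fin d → ℝ) × (Fin d → ℝ) => Function.update p.1 j p.2 :=
  continuous_fst.update j continuous_snd

theorem Pop_cont (j : Fin N) {f : (Fin N → Fin d → ℝ) → F} (hf : Continuous f) :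
    Continuous (Pop j f) :=
  continuous_parametric_integral_of_continuous (f := fun x y => f (Function.update x j y))
    (hf.comp (cont_upd j)) (isCompact_cube1 d)

theorem integral_Pop [CompleteSpace F] (j : Fin N) {f : (Fin N → Fin d → ℝ) → F}
    (hf : Continuous f) :
    ∫ x in cube d N, Pop j f x = ∫ x in cube d N, f x := by
  have h := mp_update (volume.restrict (cube1 d)) j (ι := Fin N)
  rw [← mu_eq] at h
  have h2 := integral_map (μ := (volume.restrict (cube d N)).prod (volume.restrict (cube1 d)))
    h.measurable.aemeasurable (f := f) (by rw [h.map_eq]; exact hf.aestronglyMeasurable)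
  rw [h.map_eq] at h2
  have h3 := integral_prod _ (int_cube_prod (hf.comp (cont_upd j)))
  exact (h2.trans h3).symm

/-- Zeroing the `j`-th particle coordinate. -/
def Lz (d : ℕ) {N : ℕ} (j : Fin N) : (Fin N → Fin d → ℝ) →L[ℝ] (Fin N → Fin d → ℝ) :=
  ContinuousLinearMap.pi fun k => if k = j then 0 else ContinuousLinearMap.proj k

theorem upd_eq (j : Fin N) (x : Fin N → Fin d → ℝ) (y : Fin d → ℝ) :
    Function.update x j y = Lz d j x + Pi.single j y := by
  funext k
  by_cases h : k = j
  · subst h; simp [Lz]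
  · simp [Lz, h]

theorem Lz_single_same (j : Fin N) (v : Fin d → ℝ) : Lz d j (Pi.single j v) = 0 := by
  funext k
  by_cases h : k = j
  · subst h; simp [Lz]
  · simp [Lz, h]

theorem Lz_single_ne {j k : Fin N} (h : k ≠ j) (v : Fin d → ℝ) :
    Lz d j (Pi.single k v) = Pi.single k v := by
  funext l
  by_cases hl : l = j
  · subst hl; simp [Lz, h.symm]
  · simp [Lz, hl]

theorem Pop_hasFDerivAt (j : Fin N) {f : (Fin N → Fin d → ℝ) → F} (hf : ContDiff ℝ 1 f)
    (x : Fin N → Fin d → ℝ) :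
    HasFDerivAt (Pop j f) (Pop j (fun z => (fderiv ℝ f z).comp (Lz d j)) x) x := by
  have hc : Continuous (fun z => (fderiv ℝ f z).comp (Lz d j)) :=
    (hf.continuous_fderiv one_ne_zero).clm_comp continuous_const
  have hd : ∀ (y : Fin d → ℝ) (x : Fin N → Fin d → ℝ),
      HasFDerivAt (fun x => f (Function.update x j y))
        ((fderiv ℝ f (Function.update x j y)).comp (Lz d j)) x := by
    intro y x
    have h1 : HasFDerivAt (fun x => Function.update x j y) (Lz d j) x := by
      simp only [upd_eq]
      exact (Lz d j).hasFDerivAt.add_const _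
    exact ((hf.differentiable one_ne_zero _).hasFDerivAt).comp x h1
  -- bound
  have hK : IsCompact ((Metric.closedBall x 1) ×ˢ (cube1 d)) :=
    (isCompact_closedBall x 1).prod (isCompact_cube1 d)
  obtain ⟨C, hC⟩ := hK.exists_bound_of_continuousOn
    ((hc.comp (cont_upd j)).continuousOn)
  refine hasFDerivAt_integral_of_dominated_of_fderiv_le (bound := fun _ => C)
    (F' := fun x y => (fderiv ℝ f (Function.update x j y)).comp (Lz d j))
    (Metric.closedBall_mem_nhds x one_pos) ?_ ?_ ?_ ?_ ?_ ?_
  · refine Filter.Eventually.of_forall fun z => ?_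
    exact (int_cube1 (hf.continuous.comp
      (continuous_const.update j continuous_id))).aestronglyMeasurable
  · exact int_cube1 (hf.continuous.comp (continuous_const.update j continuous_id))
  · exact (int_cube1 (hc.comp
      (continuous_const.update j continuous_id))).aestronglyMeasurable
  · refine (ae_restrict_mem (isCompact_cube1 d).measurableSet).mono fun y hy z hz => ?_
    exact hC (z, y) ⟨hz, hy⟩
  · exact integrable_const _
  · exact Filter.Eventually.of_forall fun y z _ => hd y z

theorem Pop_contDiff_nat (n : ℕ) : ∀ {F : Type} [NormedAddCommGroup F] [NormedSpace ℝ F]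
    (j : Fin N) {f : (Fin N → Fin d → ℝ) → F}, ContDiff ℝ n f → ContDiff ℝ n (Pop j f) := by
  induction n with
  | zero =>
    intro F _ _ j f hf
    exact contDiff_zero.2 (Pop_cont j (contDiff_zero.1 hf))
  | succ n ih =>
    intro F _ _ j f hf
    have h1 : ContDiff ℝ 1 f := hf.of_le (by exact_mod_cast Nat.le_add_left 1 n)
    have hfd : fderiv ℝ (Pop j f) = Pop j (fun z => (fderiv ℝ f z).comp (Lz d j)) := by
      funext x
      exact (Pop_hasFDerivAt j h1 x).fderiv
    have hs := hf
    rw [Nat.cast_add, Nat.cast_one, contDiff_succ_iff_fderiv] at hs ⊢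
    refine ⟨fun x => (Pop_hasFDerivAt j h1 x).differentiableAt, by simp, ?_⟩
    rw [hfd]
    exact ih j (hs.2.2.clm_comp contDiff_const)

theorem Pop_contDiff (j : Fin N) {f : (Fin N → Fin d → ℝ) → F} (hf : ContDiff ℝ (⊤ : ℕ∞) f) :
    ContDiff ℝ (⊤ : ℕ∞) (Pop j f) := by
  rw [contDiff_infty] at hf ⊢
  exact fun n => Pop_contDiff_nat n j (hf n)

/-- partial derivative -/
def pd (k : Fin N) (i : Fin d) (f : (Fin N → Fin d → ℝ) → ℂ) : (Fin N → Fin d → ℝ) → ℂ :=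
  fun x => fderiv ℝ f x (Pi.single k (Pi.single i 1))

theorem pd_cont (k : Fin N) (i : Fin d) {f : (Fin N → Fin d → ℝ) → ℂ}
    (hf : ContDiff ℝ (⊤ : ℕ∞) f) : Continuous (pd k i f) :=
  (hf.continuous_fderiv (by simp)).clm_apply continuous_const

theorem pd_Pop_eq (j k : Fin N) (i : Fin d) {f : (Fin N → Fin d → ℝ) → ℂ}
    (hf : ContDiff ℝ (⊤ : ℕ∞) f) (x : Fin N → Fin d → ℝ) :
    pd k i (Pop j f) x = if k = j then 0 else Pop j (pd k i f) x := by
  have h1 : ContDiff ℝ 1 f := hf.of_le (by exact_mod_cast le_top)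
  have hc : Continuous (fun z => (fderiv ℝ f z).comp (Lz d j)) :=
    (h1.continuous_fderiv one_ne_zero).clm_comp continuous_const
  rw [pd, (Pop_hasFDerivAt j h1 x).fderiv, Pop]
  have hi : Integrable (fun y => (fderiv ℝ f (Function.update x j y)).comp (Lz d j))
      (volume.restrict (cube1 d)) :=
    int_cube1 (hc.comp (continuous_const.update j continuous_id))
  rw [ContinuousLinearMap.integral_apply hi]
  split_ifs with h
  · subst h; simp [Lz_single_same]
  · simp [Lz_single_ne h, Pop, pd]

end basics

section algebra

variable {d N : ℕ}

local notation "⟪" x "," y "⟫" => inner ℝ x y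

/-- independence of the `j`-th variable -/
def Indep {F : Type} (j : Fin N) (h : (Fin N → Fin d → ℝ) → F) : Prop :=
  ∀ x y, h (Function.update x j y) = h x

theorem cont_upd_right (j : Fin N) (x : Fin N → Fin d → ℝ) :
    Continuous fun y : Fin d → ℝ => Function.update x j y :=
  continuous_const.update j continuous_id

theorem Pop_indep {F : Type} [NormedAddCommGroup F] [NormedSpace ℝ F]
    (j : Fin N) (f : (Fin N → Fin d → ℝ) → F) : Indep j (Pop j f) := by
  intro x y
  simp [Pop, Function.update_idem]

theorem Pop_of_indep {F : Type} [NormedAddCommGroup F] [NormedSpace ℝ F] [CompleteSpace F]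
    {j : Fin N} {f : (Fin N → Fin d → ℝ) → F}
    (hf : Indep j f) : Pop j f = f := by
  funext x
  simp [Pop, hf x]

theorem Pop_sub {F : Type} [NormedAddCommGroup F] [NormedSpace ℝ F]
    (j : Fin N) {f g : (Fin N → Fin d → ℝ) → F} (hf : Continuous f) (hg : Continuous g) :
    Pop j (fun x => f x - g x) = fun x => Pop j f x - Pop j g x := by
  funext x
  exact integral_sub (int_cube1 (hf.comp (cont_upd_right j x)))
    (int_cube1 (hg.comp (cont_upd_right j x)))

theorem Pop_comm {F : Type} [NormedAddCommGroup F] [NormedSpace ℝ F]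
    {j k : Fin N} (hjk : j ≠ k) {f : (Fin N → Fin d → ℝ) → F} (hf : Continuous f) :
    Pop j (Pop k f) = Pop k (Pop j f) := by
  funext x
  simp only [Pop]
  rw [integral_integral_swap]
  · simp only [Function.update_comm hjk]
  · refine int_cube1_prod (f := fun p : (Fin d → ℝ) × (Fin d → ℝ) =>
      f (Function.update (Function.update x j p.1) k p.2)) ?_
    have h1 : Continuous fun p : (Fin d → ℝ) × (Fin d → ℝ) => Function.update x j p.1 :=
      continuous_const.update j continuous_fst
    exact hf.comp (h1.update k continuous_snd)

theorem Qop_eq (j : Fin N) (f : (Fin N → Fin d → ℝ) → ℂ) :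
    Qop d N j f = fun x => f x - Pop j f x := rfl

theorem Qop_cont (j : Fin N) {f : (Fin N → Fin d → ℝ) → ℂ} (hf : Continuous f) :
    Continuous (Qop d N j f) := hf.sub (Pop_cont j hf)

theorem Qop_contDiff (j : Fin N) {f : (Fin N → Fin d → ℝ) → ℂ}
    (hf : ContDiff ℝ (⊤ : ℕ∞) f) :
    ContDiff ℝ (⊤ : ℕ∞) (Qop d N j f) := hf.sub (Pop_contDiff j hf)

theorem Pop_Qop_self (j : Fin N) {f : (Fin N → Fin d → ℝ) → ℂ} (hf : Continuous f) :
    Pop j (Qop d N j f) = fun _ => 0 := by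
  rw [Qop_eq, Pop_sub j hf (Pop_cont j hf), Pop_of_indep (Pop_indep j f)]
  simp

theorem Pop_Qop_comm {j k : Fin N} (hjk : j ≠ k) {f : (Fin N → Fin d → ℝ) → ℂ}
    (hf : Continuous f) :
    Pop j (Qop d N k f) = Qop d N k (Pop j f) := by
  rw [Qop_eq, Qop_eq, Pop_sub j hf (Pop_cont k hf), Pop_comm hjk hf]

theorem Qop_Qop_self (j : Fin N) {f : (Fin N → Fin d → ℝ) → ℂ} (hf : Continuous f) :
    Qop d N j (Qop d N j f) = Qop d N j f := by
  rw [Qop_eq j (Qop d N j f), Pop_Qop_self j hf]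
  simp

theorem int_inner_indep {j : Fin N} {h g : (Fin N → Fin d → ℝ) → ℂ} (hh : Continuous h)
    (hi : Indep j h) (hg : Continuous g) :
    ∫ x in cube d N, ⟪h x, g x⟫ = ∫ x in cube d N, ⟪h x, Pop j g x⟫ := by
  rw [← integral_Pop j (f := fun x => ⟪h x, g x⟫) (hh.inner hg)]
  congr 1
  funext x
  simp only [Pop, hi x]
  exact integral_inner (int_cube1 (hg.comp (cont_upd_right j x))) _

theorem int_weight_indep {j : Fin N} {W : (Fin N → Fin d → ℝ) → ℝ}
    {h g : (Fin N → Fin d → ℝ) → ℂ} (hW : Continuous W) (hh : Continuous h)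
    (hi : Indep j h) (hg : Continuous g) (hgi : Indep j g) :
    ∫ x in cube d N, W x * ⟪h x, g x⟫ = ∫ x in cube d N, Pop j W x * ⟪h x, g x⟫ := by
  rw [← integral_Pop j (f := fun x => W x * ⟪h x, g x⟫) (hW.mul (hh.inner hg))]
  congr 1
  funext x
  simp only [Pop, hi x, hgi x]
  exact integral_mul_const _ _

theorem int_inner_PQ (j : Fin N) {f g : (Fin N → Fin d → ℝ) → ℂ} (hf : Continuous f)
    (hg : Continuous g) :
    ∫ x in cube d N, ⟪Pop j f x, Qop d N j g x⟫ = 0 := by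
  rw [int_inner_indep (Pop_cont j hf) (Pop_indep j f) (Qop_cont j hg), Pop_Qop_self j hg]
  simp

theorem int_inner_Q (j : Fin N) {f : (Fin N → Fin d → ℝ) → ℂ} (hf : Continuous f) :
    ∫ x in cube d N, ⟪f x, Qop d N j f x⟫ = ∫ x in cube d N, ‖Qop d N j f x‖ ^ 2 := by
  have h : ∀ x, ⟪f x, Qop d N j f x⟫ = ⟪Pop j f x, Qop d N j f x⟫ + ‖Qop d N j f x‖ ^ 2 := by
    intro x
    rw [← real_inner_self_eq_norm_sq, ← inner_add_left]
    congr 1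
    simp [Qop_eq]
  simp_rw [h]
  have hQ := Qop_cont j hf
  have hP := Pop_cont j hf
  have i1 : Continuous fun x => ⟪Pop j f x, Qop d N j f x⟫ := hP.inner hQ
  have i2 : Continuous fun x => ‖Qop d N j f x‖ ^ 2 := hQ.norm.pow 2
  rw [integral_add (int_cube i1) (int_cube i2),
    int_inner_PQ j hf hf, zero_add]

theorem int_pyth (j : Fin N) {f : (Fin N → Fin d → ℝ) → ℂ} (hf : Continuous f) :
    ∫ x in cube d N, ‖f x‖ ^ 2 =
      (∫ x in cube d N, ‖Pop j f x‖ ^ 2) + ∫ x in cube d N, ‖Qop d N j f x‖ ^ 2 := by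
  have h : ∀ x, ‖f x‖ ^ 2 = ‖Pop j f x‖ ^ 2 + 2 * ⟪Pop j f x, Qop d N j f x⟫
      + ‖Qop d N j f x‖ ^ 2 := by
    intro x
    rw [← norm_add_sq_real]
    congr 2
    simp [Qop_eq]
  simp_rw [h]
  have hQ := Qop_cont j hf
  have hP := Pop_cont j hf
  have i1 : Continuous fun x => 2 * ⟪Pop j f x, Qop d N j f x⟫ :=
    continuous_const.mul (hP.inner hQ)
  have i2 : Continuous fun x => ‖Qop d N j f x‖ ^ 2 := hQ.norm.pow 2
  have i3 : Continuous fun x => ‖Pop j f x‖ ^ 2 := hP.norm.pow 2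
  have i4 : Continuous fun x => ‖Pop j f x‖ ^ 2 + 2 * ⟪Pop j f x, Qop d N j f x⟫ := i3.add i1
  rw [integral_add (int_cube i4) (int_cube i2), integral_add (int_cube i3) (int_cube i1),
    integral_const_mul, int_inner_PQ j hf hf]
  ring

theorem int_P_le (j : Fin N) {f : (Fin N → Fin d → ℝ) → ℂ} (hf : Continuous f) :
    ∫ x in cube d N, ‖Pop j f x‖ ^ 2 ≤ ∫ x in cube d N, ‖f x‖ ^ 2 := by
  rw [int_pyth j hf]
  have : 0 ≤ ∫ x in cube d N, ‖Qop d N j f x‖ ^ 2 := integral_nonneg fun x => by positivity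
  linarith

end algebra

section poincare

variable {d N : ℕ}

theorem jensen_sq {α : Type} [MeasurableSpace α] {μ : Measure α} [IsProbabilityMeasure μ]
    {f : α → ℂ} (h1 : Integrable f μ) (h2 : Integrable (fun x => ‖f x‖ ^ 2) μ) :
    ‖∫ x, f x ∂μ‖ ^ 2 ≤ ∫ x, ‖f x‖ ^ 2 ∂μ := by
  have h3 : (∫ x, ‖f x‖ ∂μ) ^ 2 ≤ ∫ x, ‖f x‖ ^ 2 ∂μ :=
    (even_two.convexOn_pow (𝕜 := ℝ)).map_integral_le (by fun_prop) isClosed_univ (by simp)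
      h1.norm h2
  refine le_trans ?_ h3
  exact pow_le_pow_left₀ (norm_nonneg _) (norm_integral_le_integral_norm f) 2

theorem poincare_one {g g' : ℝ → ℂ} (hg : ∀ s, HasDerivAt g (g' s) s) (hc : Continuous g')
    {a b : ℝ} (ha : a ∈ Set.Icc (0 : ℝ) 1) (hb : b ∈ Set.Icc (0 : ℝ) 1) :
    ‖g a - g b‖ ^ 2 ≤ ∫ s in Set.Icc (0 : ℝ) 1, ‖g' s‖ ^ 2 := by
  have h1 : ∫ s in b..a, g' s = g a - g b :=
    intervalIntegral.integral_eq_sub_of_hasDerivAt (fun s _ => hg s) (hc.intervalIntegrable _ _)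
  have hi : ∀ {F : Type} [NormedAddCommGroup F] {f : ℝ → F}, Continuous f →
    Integrable f (volume.restrict (Set.Icc (0 : ℝ) 1)) :=
    fun hf => hf.continuousOn.integrableOn_compact isCompact_Icc
  have h2 : ‖g a - g b‖ ≤ ∫ s in Set.Icc (0 : ℝ) 1, ‖g' s‖ := by
    rw [← h1]
    refine (intervalIntegral.norm_integral_le_integral_norm_uIoc).trans ?_
    refine setIntegral_mono_set (hi hc.norm) (Filter.Eventually.of_forall fun s => norm_nonneg _) ?_
    refine Filter.Eventually.of_forall ?_
    intro s hs
    have := Set.uIoc_subset_uIcc hs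
    exact (Set.uIcc_subset_Icc hb ha) this
  have h3 : (∫ s in Set.Icc (0 : ℝ) 1, ‖g' s‖) ^ 2 ≤ ∫ s in Set.Icc (0 : ℝ) 1, ‖g' s‖ ^ 2 :=
    (even_two.convexOn_pow (𝕜 := ℝ)).map_integral_le (by fun_prop) isClosed_univ (by simp)
      (hi hc.norm) (hi (hc.norm.pow 2))
  exact (pow_le_pow_left₀ (norm_nonneg _) h2 2).trans h3

theorem poincare_piecewise {u : (Fin d → ℝ) → ℂ} (hu : ContDiff ℝ 1 u) (S : Finset (Fin d)) :
    ∫ p : (Fin d → ℝ) × (Fin d → ℝ), ‖u (S.piecewise p.1 p.2) - u p.2‖ ^ 2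
      ∂((volume.restrict (cube1 d)).prod (volume.restrict (cube1 d)))
    ≤ 2 ^ S.card * ∑ i ∈ S, ∫ y in cube1 d, ‖fderiv ℝ u y (Pi.single i 1)‖ ^ 2 := by
  induction S using Finset.induction_on with
  | empty => simp
  | insert i S hi ih =>
    set m := ((volume.restrict (cube1 d)).prod (volume.restrict (cube1 d))) with hm
    have hpc : ∀ S : Finset (Fin d), Continuous
        (fun p : (Fin d → ℝ) × (Fin d → ℝ) => S.piecewise p.1 p.2) := by
      intro S
      refine continuous_pi fun k => ?_
      by_cases h : k ∈ S
      · simp only [Finset.piecewise_eq_of_mem _ _ _ h]; fun_prop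
      · simp only [Finset.piecewise_eq_of_notMem _ _ _ h]; fun_prop
    have hdc : Continuous fun y => fderiv ℝ u y (Pi.single i 1) :=
      (hu.continuous_fderiv one_ne_zero).clm_apply continuous_const
    have hupc : Continuous fun q : (Fin d → ℝ) × ℝ => Function.update q.1 i q.2 :=
      continuous_fst.update i continuous_snd
    let G : (Fin d → ℝ) → ℝ := fun z => ∫ s in Set.Icc (0 : ℝ) 1,
      ‖fderiv ℝ u (Function.update z i s) (Pi.single i 1)‖ ^ 2
    have hGc0 : Continuous fun q : (Fin d → ℝ) × ℝ =>
        ‖fderiv ℝ u (Function.update q.1 i q.2) (Pi.single i 1)‖ ^ 2 :=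
      (hdc.comp hupc).norm.pow 2
    have hGc : Continuous G :=
      continuous_parametric_integral_of_continuous
        (f := fun z s => ‖fderiv ℝ u (Function.update z i s) (Pi.single i 1)‖ ^ 2)
        hGc0 isCompact_Icc
    have hGint : ∫ y in cube1 d, G y = ∫ y in cube1 d, ‖fderiv ℝ u y (Pi.single i 1)‖ ^ 2 := by
      have h := mp_update (volume.restrict (Set.Icc (0 : ℝ) 1)) i (ι := Fin d)
      rw [← nu_eq] at h
      have h2 := integral_map
        (μ := (volume.restrict (cube1 d)).prod (volume.restrict (Set.Icc (0 : ℝ) 1)))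
        h.measurable.aemeasurable (f := fun y => ‖fderiv ℝ u y (Pi.single i 1)‖ ^ 2)
        (by rw [h.map_eq]; exact (hdc.norm.pow 2).aestronglyMeasurable)
      rw [h.map_eq] at h2
      have h4 : Integrable ((fun y => ‖fderiv ℝ u y (Pi.single i 1)‖ ^ 2) ∘
          fun q : (Fin d → ℝ) × ℝ => Function.update q.1 i q.2)
          ((volume.restrict (cube1 d)).prod (volume.restrict (Set.Icc (0 : ℝ) 1))) := by
        rw [Measure.prod_restrict]
        exact ((hdc.norm.pow 2).comp hupc).continuousOn.integrableOn_compact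
          ((isCompact_cube1 d).prod isCompact_Icc)
      have h3 := integral_prod _ h4
      exact (h2.trans h3).symm
    have hGpw : ∫ p, G (S.piecewise p.1 p.2) ∂m = ∫ y in cube1 d, G y := by
      have h := mp_piecewise (volume.restrict (Set.Icc (0 : ℝ) 1)) S
      rw [← nu_eq] at h
      have h2 := integral_map (μ := m)
        h.measurable.aemeasurable (f := G)
        (by rw [h.map_eq]; exact hGc.aestronglyMeasurable)
      rw [h.map_eq] at h2
      exact h2.symm
    have hpt : ∀ᵐ p ∂m, ‖u ((insert i S).piecewise p.1 p.2) - u p.2‖ ^ 2 ≤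
        2 * G (S.piecewise p.1 p.2) + 2 * ‖u (S.piecewise p.1 p.2) - u p.2‖ ^ 2 := by
      rw [hm, Measure.prod_restrict]
      refine (ae_restrict_mem ((isCompact_cube1 d).prod
        (isCompact_cube1 d)).measurableSet).mono ?_
      rintro ⟨x, y⟩ ⟨hx, hy⟩
      have hxi : x i ∈ Set.Icc (0 : ℝ) 1 := hx i (Set.mem_univ i)
      have hyi : y i ∈ Set.Icc (0 : ℝ) 1 := hy i (Set.mem_univ i)
      simp only
      rw [Finset.piecewise_insert]
      set z := S.piecewise x y with hz
      have hzi : z = Function.update z i (y i) := by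
        have : z i = y i := by simp [hz, hi]
        rw [← this, Function.update_eq_self]
      have key : ‖u (Function.update z i (x i)) - u (Function.update z i (y i))‖ ^ 2 ≤ G z := by
        refine poincare_one (g := fun s => u (Function.update z i s)) ?_ (hdc.comp
          (continuous_const.update i continuous_id)) hxi hyi
        intro s
        exact ((hu.differentiable one_ne_zero _).hasFDerivAt).comp_hasDerivAt s
          (hasDerivAt_update z i s)
      rw [← hzi] at key
      have tri : ‖u (Function.update z i (x i)) - u y‖ ≤
          ‖u (Function.update z i (x i)) - u z‖ + ‖u z - u y‖ := norm_sub_le_norm_sub_add_norm_sub _ _ _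
      have := norm_nonneg (u (Function.update z i (x i)) - u y)
      nlinarith [sq_nonneg (‖u (Function.update z i (x i)) - u z‖ - ‖u z - u y‖)]
    have hci : ∀ S : Finset (Fin d), Integrable
        (fun p : (Fin d → ℝ) × (Fin d → ℝ) => ‖u (S.piecewise p.1 p.2) - u p.2‖ ^ 2) m := by
      intro S
      exact int_cube1_prod (((hu.continuous.comp (hpc S)).sub
        (hu.continuous.comp continuous_snd)).norm.pow 2)
    have hGi : Integrable
        (fun p : (Fin d → ℝ) × (Fin d → ℝ) => G (S.piecewise p.1 p.2)) m :=
      int_cube1_prod (hGc.comp (hpc S))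
    have h1 := integral_mono_ae (hci (insert i S))
      ((hGi.const_mul 2).add ((hci S).const_mul 2)) hpt
    refine h1.trans ?_
    simp only [Pi.add_apply]
    rw [integral_add (hGi.const_mul 2) ((hci S).const_mul 2), integral_const_mul,
      integral_const_mul, hGpw, hGint, Finset.sum_insert hi, Finset.card_insert_of_notMem hi]
    have hD : 0 ≤ ∫ y in cube1 d, ‖fderiv ℝ u y (Pi.single i 1)‖ ^ 2 :=
      integral_nonneg fun x => by positivity
    have h2 : (1 : ℝ) ≤ 2 ^ S.card := one_le_pow₀ (by norm_num)
    rw [pow_succ]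
    nlinarith

theorem poincare_cube1 {u : (Fin d → ℝ) → ℂ} (hu : ContDiff ℝ 1 u) :
    ∫ y in cube1 d, ‖u y - ∫ z in cube1 d, u z‖ ^ 2
    ≤ 2 ^ d * ∑ i, ∫ y in cube1 d, ‖fderiv ℝ u y (Pi.single i 1)‖ ^ 2 := by
  have h := poincare_piecewise hu Finset.univ
  simp only [Finset.piecewise_univ, Finset.card_univ, Fintype.card_fin] at h
  refine le_trans ?_ h
  have huc := hu.continuous
  have hc : Continuous fun p : (Fin d → ℝ) × (Fin d → ℝ) => ‖u p.1 - u p.2‖ ^ 2 := by fun_prop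
  rw [integral_prod _ (int_cube1_prod hc)]
  refine integral_mono (int_cube1 (by fun_prop)) ((int_cube1_prod hc).integral_prod_left) ?_
  intro x
  have e : u x - ∫ z in cube1 d, u z = ∫ z in cube1 d, (u x - u z) := by
    rw [integral_sub (integrable_const _) (int_cube1 huc)]
    simp
  simp only
  rw [e]
  exact jensen_sq (int_cube1 (by fun_prop)) (int_cube1 (by fun_prop))

theorem poincare_N (k : Fin N) {f : (Fin N → Fin d → ℝ) → ℂ} (hf : ContDiff ℝ (⊤ : ℕ∞) f) :
    ∫ x in cube d N, ‖Qop d N k f x‖ ^ 2 ≤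
      2 ^ d * ∑ i, ∫ x in cube d N, ‖pd k i f x‖ ^ 2 := by
  have hfc := hf.continuous
  have h1 : ContDiff ℝ 1 f := hf.of_le (by exact_mod_cast le_top)
  have hQ : Continuous fun x => ‖Qop d N k f x‖ ^ 2 := (Qop_cont k hfc).norm.pow 2
  have hp : ∀ i, Continuous fun x => ‖pd k i f x‖ ^ 2 := fun i => (pd_cont k i hf).norm.pow 2
  rw [← integral_Pop k hQ]
  have e : ∀ i, ∫ x in cube d N, ‖pd k i f x‖ ^ 2 =
      ∫ x in cube d N, Pop k (fun x => ‖pd k i f x‖ ^ 2) x :=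
    fun i => (integral_Pop k (hp i)).symm
  simp_rw [e]
  rw [← integral_finsetSum _ (fun i _ => int_cube (Pop_cont k (hp i))), ← integral_const_mul]
  refine integral_mono (int_cube (Pop_cont k hQ)) (int_cube (continuous_const.mul
    (continuous_finsetSum _ fun i _ => Pop_cont k (hp i)))) ?_
  intro x
  have hu : ContDiff ℝ 1 (fun y : Fin d → ℝ => f (Function.update x k y)) := by
    refine h1.comp (f := fun y : Fin d → ℝ => Function.update x k y) ?_
    simp only [upd_eq]
    exact contDiff_const.add (ContinuousLinearMap.single ℝ (fun _ : Fin N => Fin d → ℝ) k).contDiff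
  have h := poincare_cube1 hu
  have e1 : ∀ y i, fderiv ℝ (fun y : Fin d → ℝ => f (Function.update x k y)) y (Pi.single i 1)
      = pd k i f (Function.update x k y) := by
    intro y i
    have := ((h1.differentiable one_ne_zero _).hasFDerivAt).comp y
      (hasFDerivAt_update (𝕜 := ℝ) x (i := k) y)
    rw [show (fun y : Fin d → ℝ => f (Function.update x k y)) = f ∘ (Function.update x k) from rfl,
      this.fderiv, pd]
    simp only [ContinuousLinearMap.comp_apply]
    congr 1
    funext l
    by_cases hl : l = k
    · subst hl; simp
    · simp [hl]
  simp_rw [e1] at h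
  have e2 : ∀ y, Qop d N k f (Function.update x k y) =
      f (Function.update x k y) - ∫ z in cube1 d, f (Function.update x k z) := by
    intro y
    simp [Qop, Function.update_idem]
  simp only [Pop, e2]
  exact h

end poincare

section potential

variable {d : ℕ} {hw : (Fin d → ℤ) → ℝ}

/-- phase `p · x` -/
def ph (k : Fin d → ℤ) (x : Fin d → ℝ) : ℝ := ∑ i, (2 * π * (k i : ℝ)) * x i

theorem ph_cont (k : Fin d → ℤ) : Continuous (ph k) := by
  unfold ph; fun_prop

theorem ph_sub (k : Fin d → ℤ) (x y : Fin d → ℝ) : ph k (x - y) = ph k x - ph k y := by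
  simp [ph, mul_sub, Finset.sum_sub_distrib]

theorem w_summable (h0 : ∀ k, 0 ≤ hw k) (hs : Summable hw) (x : Fin d → ℝ) :
    Summable fun k => hw k * Real.cos (ph k x) := by
  refine Summable.of_norm_bounded hs fun k => ?_
  rw [norm_mul, Real.norm_of_nonneg (h0 k)]
  exact mul_le_of_le_one_right (h0 k) (Real.abs_cos_le_one _)

theorem w_eq (h0 : ∀ k, 0 ≤ hw k) (hs : Summable hw) (x : Fin d → ℝ) :
    wOf d hw x = ∑' k, hw k * Real.cos (ph k x) := by
  have hsum : Summable fun k : Fin d → ℤ =>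
      (hw k : ℂ) * Complex.exp (Complex.I * ((ph k x : ℝ) : ℂ)) := by
    refine Summable.of_norm_bounded hs fun k => ?_
    rw [norm_mul, mul_comm Complex.I, Complex.norm_exp_ofReal_mul_I, mul_one, Complex.norm_real,
      Real.norm_of_nonneg (h0 k)]
  unfold wOf
  change (∑' k : Fin d → ℤ, (hw k : ℂ) * Complex.exp (Complex.I * ((ph k x : ℝ) : ℂ))).re = _
  rw [Complex.re_tsum hsum]
  congr 1
  funext k
  rw [Complex.re_ofReal_mul, mul_comm Complex.I, Complex.exp_ofReal_mul_I_re]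

theorem w_cont (h0 : ∀ k, 0 ≤ hw k) (hs : Summable hw) : Continuous (wOf d hw) := by
  have : wOf d hw = fun x => ∑' k, hw k * Real.cos (ph k x) := funext (w_eq h0 hs)
  rw [this]
  refine continuous_tsum (fun k => ?_) hs fun k x => ?_
  · exact continuous_const.mul (Real.continuous_cos.comp (ph_cont k))
  · rw [norm_mul, Real.norm_of_nonneg (h0 k)]
    exact mul_le_of_le_one_right (h0 k) (Real.abs_cos_le_one _)

theorem w_abs_le (h0 : ∀ k, 0 ≤ hw k) (hs : Summable hw) (x : Fin d → ℝ) :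
    |wOf d hw x| ≤ ∑' k, hw k := by
  rw [w_eq h0 hs, ← Real.norm_eq_abs]
  refine tsum_of_norm_bounded hs.hasSum fun k => ?_
  rw [norm_mul, Real.norm_of_nonneg (h0 k)]
  exact mul_le_of_le_one_right (h0 k) (Real.abs_cos_le_one _)

theorem w_zero (h0 : ∀ k, 0 ≤ hw k) (hs : Summable hw) : wOf d hw 0 = ∑' k, hw k := by
  rw [w_eq h0 hs]
  simp [ph]

theorem w_neg (h0 : ∀ k, 0 ≤ hw k) (hs : Summable hw) (x y : Fin d → ℝ) :
    wOf d hw (x - y) = wOf d hw (y - x) := by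
  rw [w_eq h0 hs, w_eq h0 hs]
  congr 1
  funext k
  rw [ph_sub, ph_sub, ← Real.cos_neg, neg_sub]

theorem w_sum_ge (h0 : ∀ k, 0 ≤ hw k) (hs : Summable hw) {N : ℕ} (x : Fin N → Fin d → ℝ) :
    hw 0 * (N : ℝ) ^ 2 ≤ ∑ j, ∑ k, wOf d hw (x j - x k) := by
  simp_rw [w_eq h0 hs]
  have e : ∑ j, ∑ k, ∑' p, hw p * Real.cos (ph p (x j - x k)) =
      ∑' p, hw p * ((∑ j, Real.cos (ph p (x j))) ^ 2 + (∑ j, Real.sin (ph p (x j))) ^ 2) := by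
    have h1 : ∀ j, ∑ k, ∑' p, hw p * Real.cos (ph p (x j - x k)) =
        ∑' p, ∑ k, hw p * Real.cos (ph p (x j - x k)) := fun j =>
      (Summable.tsum_finsetSum fun k _ => w_summable h0 hs _).symm
    simp_rw [h1]
    rw [← Summable.tsum_finsetSum fun j _ => summable_sum fun k _ => w_summable h0 hs _]
    congr 1
    funext p
    simp_rw [ph_sub, Real.cos_sub, sq, Finset.sum_mul_sum, ← Finset.sum_add_distrib,
      Finset.mul_sum]
  have hsum : Summable fun p => hw p * ((∑ j, Real.cos (ph p (x j))) ^ 2 +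
      (∑ j, Real.sin (ph p (x j))) ^ 2) := by
    have : Summable fun p => ∑ j, ∑ k, hw p * Real.cos (ph p (x j - x k)) :=
      summable_sum fun j _ => summable_sum fun k _ => w_summable h0 hs _
    refine this.congr fun p => ?_
    simp_rw [ph_sub, Real.cos_sub, sq, Finset.sum_mul_sum, ← Finset.sum_add_distrib,
      Finset.mul_sum]
  rw [e]
  refine le_trans ?_ (hsum.le_tsum 0 fun p _ => mul_nonneg (h0 p) (by positivity))
  simp [ph]

theorem int_exp_Icc {n : ℤ} (hn : n ≠ 0) :
    ∫ y in Set.Icc (0 : ℝ) 1, Complex.exp (-(2 * π * (n : ℂ) * Complex.I) * (y : ℂ)) = 0 := by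
  have hc : -(2 * π * (n : ℂ) * Complex.I) ≠ 0 := by
    simp [Real.pi_ne_zero, hn]
  rw [integral_Icc_eq_integral_Ioc, ← intervalIntegral.integral_of_le zero_le_one,
    integral_exp_mul_complex hc]
  have : Complex.exp (-(2 * π * (n : ℂ) * Complex.I) * ((1 : ℝ) : ℂ)) = 1 := by
    rw [Complex.exp_eq_one_iff]
    exact ⟨-n, by push_cast; ring⟩
  rw [this]
  simp

theorem int_cos_ph (k : Fin d → ℤ) (hk : k ≠ 0) (z : Fin d → ℝ) :
    ∫ y in cube1 d, Real.cos (ph k (z - y)) = 0 := by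
  have hc : Continuous fun y => Complex.exp (((ph k (z - y) : ℝ) : ℂ) * Complex.I) := by
    have := ph_cont k
    fun_prop
  have e : ∀ y, Real.cos (ph k (z - y)) =
      (Complex.exp (((ph k (z - y) : ℝ) : ℂ) * Complex.I)).re := by
    intro y
    rw [Complex.exp_ofReal_mul_I_re]
  simp_rw [e]
  have h1 := integral_re (𝕜 := ℂ) (int_cube1 hc)
  simp only [RCLike.re_eq_complex_re] at h1
  rw [h1]
  have e2 : ∀ y : Fin d → ℝ, Complex.exp (((ph k (z - y) : ℝ) : ℂ) * Complex.I) =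
      Complex.exp (((ph k z : ℝ) : ℂ) * Complex.I) *
        ∏ i, Complex.exp (-(2 * π * (k i : ℂ) * Complex.I) * (y i : ℂ)) := by
    intro y
    rw [← Complex.exp_sum, ← Complex.exp_add, ph_sub]
    congr 1
    simp only [ph]
    push_cast
    rw [sub_mul, sub_eq_add_neg, Finset.sum_mul Finset.univ (fun i => 2 * (π:ℂ) * (k i) * (y i)),
      ← Finset.sum_neg_distrib]
    congr 1
    refine Finset.sum_congr rfl fun i _ => ?_
    ring
  simp_rw [e2]
  rw [integral_const_mul, nu_eq, integral_fintype_prod_eq_prod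
    (f := fun i (t : ℝ) => Complex.exp (-(2 * π * (k i : ℂ) * Complex.I) * (t : ℂ)))]
  obtain ⟨i, hi⟩ := Function.ne_iff.1 hk
  rw [Finset.prod_eq_zero (Finset.mem_univ i) (int_exp_Icc hi)]
  simp

theorem w_int (h0 : ∀ k, 0 ≤ hw k) (hs : Summable hw) (z : Fin d → ℝ) :
    ∫ y in cube1 d, wOf d hw (z - y) = hw 0 := by
  simp_rw [w_eq h0 hs]
  have hc : ∀ k, Continuous fun y => hw k * Real.cos (ph k (z - y)) := fun k => by
    have := ph_cont k
    fun_prop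
  have hb : ∀ k y, ‖hw k * Real.cos (ph k (z - y))‖ ≤ hw k := fun k y => by
    rw [norm_mul, Real.norm_of_nonneg (h0 k)]
    exact mul_le_of_le_one_right (h0 k) (Real.abs_cos_le_one _)
  rw [← integral_tsum_of_summable_integral_norm (fun k => int_cube1 (hc k))]
  · rw [tsum_eq_single 0]
    · simp [ph]
    · intro k hk
      rw [integral_const_mul, int_cos_ph k hk, mul_zero]
  · refine Summable.of_nonneg_of_le (fun k => integral_nonneg fun y => norm_nonneg _) (fun k => ?_) hs
    have := integral_mono (int_cube1 (hc k).norm) (integrable_const (hw k)) (hb k)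
    simpa using this

end potential

section main

variable {d N : ℕ} {hw : (Fin d → ℤ) → ℝ}

local notation "⟪" x "," y "⟫" => inner ℝ x y

/-- total interaction -/
def Vtot (d N : ℕ) (w : (Fin d → ℝ) → ℝ) (x : Fin N → Fin d → ℝ) : ℝ :=
  ∑ j : Fin N, ∑ k : Fin N, if j < k then w (x j - x k) else 0

theorem Vtot_cont {w : (Fin d → ℝ) → ℝ} (hc : Continuous w) : Continuous (Vtot d N w) := by
  unfold Vtot
  refine continuous_finsetSum _ fun j _ => continuous_finsetSum _ fun k _ => ?_
  split_ifs
  · exact hc.comp ((continuous_apply j).sub (continuous_apply k))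
  · exact continuous_const

theorem Vtot_two (h0 : ∀ k, 0 ≤ hw k) (hs : Summable hw) (x : Fin N → Fin d → ℝ) :
    2 * Vtot d N (wOf d hw) x =
      (∑ j, ∑ k, wOf d hw (x j - x k)) - N * ∑' k, hw k := by
  have e1 : ∀ j k : Fin N, wOf d hw (x j - x k) =
      (if j < k then wOf d hw (x j - x k) else 0) + (if k < j then wOf d hw (x k - x j) else 0)
      + (if j = k then ∑' k, hw k else 0) := by
    intro j k
    rcases lt_trichotomy j k with h | h | h
    · simp [h, h.not_gt, h.ne]
    · subst h; simp [w_zero h0 hs]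
    · simp [h, h.not_gt, h.ne', w_neg h0 hs (x j) (x k)]
  have e2 : ∑ j, ∑ k, wOf d hw (x j - x k) = Vtot d N (wOf d hw) x + Vtot d N (wOf d hw) x
      + N * ∑' k, hw k := by
    simp_rw [Finset.sum_congr rfl (fun j _ => Finset.sum_congr rfl (fun k _ => e1 j k)),
      Finset.sum_add_distrib]
    congr 1
    · congr 1
      rw [Finset.sum_comm]; rfl
    · simp
  rw [e2]; ring

theorem Vtot_ge (h0 : ∀ k, 0 ≤ hw k) (hs : Summable hw) (x : Fin N → Fin d → ℝ) :
    (hw 0 * (N : ℝ) ^ 2 - N * ∑' k, hw k) / 2 ≤ Vtot d N (wOf d hw) x := by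
  have h1 := Vtot_two h0 hs x
  have h2 := w_sum_ge h0 hs x
  linarith

/-- bilinear energy density -/
def eden (lam : ℝ) (w : (Fin d → ℝ) → ℝ) (f g : (Fin N → Fin d → ℝ) → ℂ)
    (x : Fin N → Fin d → ℝ) : ℝ :=
  (∑ k : Fin N, ∑ i : Fin d, ⟪pd k i f x, pd k i g x⟫) + lam * Vtot d N w x * ⟪f x, g x⟫

theorem eden_cont (lam : ℝ) {w : (Fin d → ℝ) → ℝ} (hc : Continuous w)
    {f g : (Fin N → Fin d → ℝ) → ℂ} (hf : ContDiff ℝ (⊤ : ℕ∞) f) (hg : ContDiff ℝ (⊤ : ℕ∞) g) :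
    Continuous (eden lam w f g) := by
  unfold eden
  refine Continuous.add ?_ ?_
  · exact continuous_finsetSum _ fun k _ => continuous_finsetSum _ fun i _ =>
      (pd_cont k i hf).inner (pd_cont k i hg)
  · exact (continuous_const.mul (Vtot_cont hc)).mul (hf.continuous.inner hg.continuous)

theorem energy_eq (lam : ℝ) (w : (Fin d → ℝ) → ℝ) (f : (Fin N → Fin d → ℝ) → ℂ) :
    energy d N lam w f = ∫ x in cube d N, eden lam w f f x := by
  unfold energy eden Vtot pd
  simp only [real_inner_self_eq_norm_sq]

theorem pd_add_smul (k : Fin N) (i : Fin d) (t : ℝ) {f g : (Fin N → Fin d → ℝ) → ℂ}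
    (hf : ContDiff ℝ (⊤ : ℕ∞) f) (hg : ContDiff ℝ (⊤ : ℕ∞) g) (x : Fin N → Fin d → ℝ) :
    pd k i (fun x => f x + t • g x) x = pd k i f x + t • pd k i g x := by
  have h1 := hf.differentiable (by simp) x
  have h2 := hg.differentiable (by simp) x
  unfold pd
  have : HasFDerivAt (fun x => f x + t • g x) (fderiv ℝ f x + t • fderiv ℝ g x) x :=
    h1.hasFDerivAt.add (h2.hasFDerivAt.const_smul t)
  rw [this.fderiv]
  simp

theorem pd_smul (k : Fin N) (i : Fin d) (t : ℝ) {g : (Fin N → Fin d → ℝ) → ℂ}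
    (hg : ContDiff ℝ (⊤ : ℕ∞) g) (x : Fin N → Fin d → ℝ) :
    pd k i (fun x => t • g x) x = t • pd k i g x := by
  have h2 := hg.differentiable (by simp) x
  unfold pd
  have : HasFDerivAt (fun x => t • g x) (t • fderiv ℝ g x) x :=
    h2.hasFDerivAt.const_smul t
  rw [this.fderiv]
  simp

theorem pd_sum (k : Fin N) (i : Fin d) {g : Fin N → (Fin N → Fin d → ℝ) → ℂ}
    (hg : ∀ j, ContDiff ℝ (⊤ : ℕ∞) (g j)) (x : Fin N → Fin d → ℝ) :
    pd k i (fun x => ∑ j, g j x) x = ∑ j, pd k i (g j) x := by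
  unfold pd
  rw [fderiv_fun_sum fun j _ => (hg j).differentiable (by simp) x]
  simp

theorem eden_expand (lam : ℝ) (w : (Fin d → ℝ) → ℝ) (t : ℝ) {f g : (Fin N → Fin d → ℝ) → ℂ}
    (hf : ContDiff ℝ (⊤ : ℕ∞) f) (hg : ContDiff ℝ (⊤ : ℕ∞) g) (x : Fin N → Fin d → ℝ) :
    eden lam w (fun x => f x + t • g x) (fun x => f x + t • g x) x =
      eden lam w f f x + (2 * t) * eden lam w f g x + t ^ 2 * eden lam w g g x := by
  have key : ∀ a b : ℂ, ⟪a + t • b, a + t • b⟫ = ⟪a, a⟫ + 2 * t * ⟪a, b⟫ + t ^ 2 * ⟪b, b⟫ := by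
    intro a b
    simp only [inner_add_left, inner_add_right, real_inner_smul_left, real_inner_smul_right,
      real_inner_comm b a]
    rw [real_inner_comm a b]
    ring
  unfold eden
  simp only [pd_add_smul _ _ _ hf hg, key, Finset.sum_add_distrib, ← Finset.mul_sum]
  ring

theorem eden_smul (lam : ℝ) (w : (Fin d → ℝ) → ℝ) (t : ℝ) {g : (Fin N → Fin d → ℝ) → ℂ}
    (hg : ContDiff ℝ (⊤ : ℕ∞) g) (x : Fin N → Fin d → ℝ) :
    eden lam w (fun x => t • g x) (fun x => t • g x) x = t ^ 2 * eden lam w g g x := by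
  unfold eden
  simp only [pd_smul _ _ _ hg, real_inner_smul_left, real_inner_smul_right, ← Finset.mul_sum]
  ring

theorem eden_sum (lam : ℝ) (w : (Fin d → ℝ) → ℝ) (f : (Fin N → Fin d → ℝ) → ℂ)
    {g : Fin N → (Fin N → Fin d → ℝ) → ℂ}
    (hg : ∀ j, ContDiff ℝ (⊤ : ℕ∞) (g j)) (x : Fin N → Fin d → ℝ) :
    eden lam w f (fun x => ∑ j, g j x) x = ∑ j, eden lam w f (g j) x := by
  unfold eden
  simp only [pd_sum _ _ hg, inner_sum, Finset.sum_add_distrib, ← Finset.mul_sum]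
  congr 1
  conv_rhs => rw [Finset.sum_comm]
  refine Finset.sum_congr rfl fun k _ => ?_
  rw [Finset.sum_comm]

theorem energy_ge (h0 : ∀ k, 0 ≤ hw k) (hs : Summable hw) {lam : ℝ} (hl : 0 < lam)
    {f : (Fin N → Fin d → ℝ) → ℂ} (hf : ContDiff ℝ (⊤ : ℕ∞) f) :
    (∑ k : Fin N, ∑ i : Fin d, ∫ x in cube d N, ‖pd k i f x‖ ^ 2) +
      lam * ((hw 0 * (N : ℝ) ^ 2 - N * ∑' k, hw k) / 2) * ∫ x in cube d N, ‖f x‖ ^ 2 ≤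
    energy d N lam (wOf d hw) f := by
  have hp : ∀ k i, Continuous fun x => ‖pd k i f x‖ ^ 2 := fun k i => (pd_cont k i hf).norm.pow 2
  have hn : Continuous fun x => ‖f x‖ ^ 2 := hf.continuous.norm.pow 2
  have e1 : ∀ k : Fin N, ∑ i : Fin d, ∫ x in cube d N, ‖pd k i f x‖ ^ 2 =
      ∫ x in cube d N, ∑ i : Fin d, ‖pd k i f x‖ ^ 2 := fun k =>
    (integral_finsetSum _ fun i _ => int_cube (hp k i)).symm
  have hp2 : ∀ k, Continuous fun x => ∑ i : Fin d, ‖pd k i f x‖ ^ 2 := fun k =>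
    continuous_finsetSum _ fun i _ => hp k i
  have hp3 : Continuous fun x => ∑ k : Fin N, ∑ i : Fin d, ‖pd k i f x‖ ^ 2 :=
    continuous_finsetSum _ fun k _ => hp2 k
  simp_rw [e1]
  rw [← integral_finsetSum _ fun k _ => int_cube (hp2 k), ← integral_const_mul,
    ← integral_add (int_cube hp3) ((int_cube hn).const_mul _), energy_eq]
  refine integral_mono ((int_cube hp3).add ((int_cube hn).const_mul _))
    (int_cube (eden_cont lam (w_cont h0 hs) hf hf)) ?_
  intro x
  simp only [eden, real_inner_self_eq_norm_sq]
  have := Vtot_ge h0 hs x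
  gcongr

theorem GSE_le (h0 : ∀ k, 0 ≤ hw k) (hs : Summable hw) {lam : ℝ} (hl : 0 < lam)
    {f : (Fin N → Fin d → ℝ) → ℂ} (hf : IsAdmissible d N f) :
    GSE d N lam (wOf d hw) ≤ energy d N lam (wOf d hw) f := by
  refine csInf_le ?_ ⟨f, hf, rfl⟩
  refine ⟨lam * ((hw 0 * (N : ℝ) ^ 2 - N * ∑' k, hw k) / 2), ?_⟩
  rintro e ⟨g, hg, rfl⟩
  have h := energy_ge h0 hs hl hg.1
  rw [hg.2.2.2, mul_one] at h
  have : 0 ≤ ∑ k : Fin N, ∑ i : Fin d, ∫ x in cube d N, ‖pd k i g x‖ ^ 2 :=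
    Finset.sum_nonneg fun k _ => Finset.sum_nonneg fun i _ => integral_nonneg fun x => by positivity
  linarith

theorem Pop_W (h0 : ∀ k, 0 ≤ hw k) (hs : Summable hw) {j k : Fin N} (hjk : j ≠ k)
    (x : Fin N → Fin d → ℝ) :
    Pop k (fun x => wOf d hw (x j - x k)) x = hw 0 := by
  simp only [Pop, Function.update_of_ne hjk, Function.update_self]
  exact w_int h0 hs (x j)

theorem W_cont (h0 : ∀ k, 0 ≤ hw k) (hs : Summable hw) (j k : Fin N) :
    Continuous (fun x : Fin N → Fin d → ℝ => wOf d hw (x j - x k)) :=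
  (w_cont h0 hs).comp ((continuous_apply j).sub (continuous_apply k))

theorem energy_one (h0 : ∀ k, 0 ≤ hw k) (hs : Summable hw) (lam : ℝ) :
    energy d N lam (wOf d hw) (fun _ => 1) = lam * (((N : ℝ) ^ 2 - N) * hw 0 / 2) := by
  have e1 : ∀ x, eden lam (wOf d hw) (fun _ : Fin N → Fin d → ℝ => (1 : ℂ)) (fun _ => 1) x =
      lam / 2 * ((∑ j, ∑ k, wOf d hw (x j - x k)) - N * ∑' k, hw k) := by
    intro x
    rw [← Vtot_two h0 hs x]
    simp [eden, pd]
    ring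
  have e2 : ∀ j k : Fin N, ∫ x in cube d N, wOf d hw (x j - x k) =
      hw 0 + if j = k then (∑' k, hw k) - hw 0 else 0 := by
    intro j k
    split_ifs with h
    · subst h; simp [w_zero h0 hs]
    · rw [← integral_Pop k (W_cont h0 hs j k)]
      simp_rw [Pop_W h0 hs h]
      simp
  have hc1 : ∀ j : Fin N, Continuous fun x : Fin N → Fin d → ℝ => ∑ k, wOf d hw (x j - x k) :=
    fun j => continuous_finsetSum _ fun k _ => W_cont h0 hs j k
  have hc2 : Continuous fun x : Fin N → Fin d → ℝ => ∑ j, ∑ k, wOf d hw (x j - x k) :=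
    continuous_finsetSum _ fun j _ => hc1 j
  rw [energy_eq]
  simp_rw [e1]
  rw [integral_const_mul, integral_sub (int_cube hc2) (integrable_const _),
    integral_finsetSum _ fun j _ => int_cube (hc1 j)]
  simp_rw [integral_finsetSum _ fun k _ => int_cube (W_cont h0 hs _ k), e2,
    Finset.sum_add_distrib]
  simp
  ring

theorem adm_one : IsAdmissible d N (fun _ => (1 : ℂ)) := by
  refine ⟨contDiff_const, fun _ _ _ => rfl, fun _ _ => rfl, by simp⟩

theorem GSE_upper (h0 : ∀ k, 0 ≤ hw k) (hs : Summable hw) {lam : ℝ} (hl : 0 < lam) :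
    GSE d N lam (wOf d hw) ≤ lam * (((N : ℝ) ^ 2 - N) * hw 0 / 2) := by
  rw [← energy_one h0 hs]
  exact GSE_le h0 hs hl adm_one

theorem variation (h0 : ∀ k, 0 ≤ hw k) (hs : Summable hw) {lam : ℝ} (hl : 0 < lam)
    {f g : (Fin N → Fin d → ℝ) → ℂ} (hf : IsAdmissible d N f)
    (hmin : energy d N lam (wOf d hw) f = GSE d N lam (wOf d hw))
    (hg : ContDiff ℝ (⊤ : ℕ∞) g)
    (hg1 : ∀ (x : Fin N → Fin d → ℝ) (j : Fin N) (v : Fin d → ℤ),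
      g (Function.update x j (x j + fun i => (v i : ℝ))) = g x)
    (hg2 : ∀ (σ : Equiv.Perm (Fin N)) (x : Fin N → Fin d → ℝ), g (x ∘ σ) = g x) :
    ∫ x in cube d N, eden lam (wOf d hw) f g x ≤
      GSE d N lam (wOf d hw) * ∫ x in cube d N, ⟪f x, g x⟫ := by
  set E := GSE d N lam (wOf d hw) with hE
  set A := ∫ x in cube d N, eden lam (wOf d hw) f g x with hA
  set B := energy d N lam (wOf d hw) g with hB
  set m := ∫ x in cube d N, ⟪f x, g x⟫ with hm
  set q := ∫ x in cube d N, ‖g x‖ ^ 2 with hq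
  have hwc := w_cont h0 hs
  have hq0 : 0 ≤ q := integral_nonneg fun x => by positivity
  have hen : ∀ t : ℝ, energy d N lam (wOf d hw) (fun x => f x + t • g x) =
      E + 2 * t * A + t ^ 2 * B := by
    intro t
    have i1 := eden_cont lam hwc hf.1 hf.1
    have i2 := eden_cont lam hwc hf.1 hg
    have i3 := eden_cont lam hwc hg hg
    have i4 : Continuous fun x => eden lam (wOf d hw) f f x
        + 2 * t * eden lam (wOf d hw) f g x := i1.add (continuous_const.mul i2)
    rw [energy_eq]
    simp_rw [eden_expand lam (wOf d hw) t hf.1 hg]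
    rw [integral_add (int_cube i4) ((int_cube i3).const_mul _),
      integral_add (int_cube i1) ((int_cube i2).const_mul _),
      integral_const_mul, integral_const_mul, ← energy_eq, ← energy_eq, hmin]
  have hno : ∀ t : ℝ, ∫ x in cube d N, ‖f x + t • g x‖ ^ 2 = 1 + 2 * t * m + t ^ 2 * q := by
    intro t
    have e : ∀ x, ‖f x + t • g x‖ ^ 2 = ‖f x‖ ^ 2 + 2 * t * ⟪f x, g x⟫ + t ^ 2 * ‖g x‖ ^ 2 := by
      intro x
      rw [norm_add_sq_real, real_inner_smul_right, norm_smul, mul_pow, Real.norm_eq_abs, sq_abs]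
      ring
    have i1 : Continuous fun x => ‖f x‖ ^ 2 := hf.1.continuous.norm.pow 2
    have i2 : Continuous fun x => ⟪f x, g x⟫ := hf.1.continuous.inner hg.continuous
    have i3 : Continuous fun x => ‖g x‖ ^ 2 := hg.continuous.norm.pow 2
    have i4 : Continuous fun x => ‖f x‖ ^ 2 + 2 * t * ⟪f x, g x⟫ := i1.add (continuous_const.mul i2)
    simp_rw [e]
    rw [integral_add (int_cube i4) ((int_cube i3).const_mul _),
      integral_add (int_cube i1) ((int_cube i2).const_mul _),
      integral_const_mul, integral_const_mul, hf.2.2.2]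
  have hvar : ∀ t : ℝ, 0 < 1 + 2 * t * m + t ^ 2 * q →
      E * (1 + 2 * t * m + t ^ 2 * q) ≤ E + 2 * t * A + t ^ 2 * B := by
    intro t ht
    set n := 1 + 2 * t * m + t ^ 2 * q with hn
    set c := (Real.sqrt n)⁻¹ with hc
    have hc2 : c ^ 2 * n = 1 := by
      rw [hc, inv_pow, Real.sq_sqrt ht.le, inv_mul_cancel₀ ht.ne']
    have hsm : ContDiff ℝ (⊤ : ℕ∞) (fun x => f x + t • g x) := hf.1.add (hg.const_smul t)
    have hadm : IsAdmissible d N (fun x => c • (f x + t • g x)) := by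
      refine ⟨hsm.const_smul c, ?_, ?_, ?_⟩
      · intro x j v
        simp only [hf.2.1 x j v, hg1 x j v]
      · intro σ x
        simp only [hf.2.2.1 σ x, hg2 σ x]
      · simp_rw [norm_smul, mul_pow, Real.norm_eq_abs, sq_abs]
        rw [integral_const_mul, hno t, hc2]
    have h1 := GSE_le h0 hs hl hadm
    rw [energy_eq] at h1
    simp_rw [eden_smul lam (wOf d hw) c hsm] at h1
    rw [integral_const_mul, ← energy_eq, hen t] at h1
    calc E * n ≤ (c ^ 2 * (E + 2 * t * A + t ^ 2 * B)) * n :=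
          mul_le_mul_of_nonneg_right h1 ht.le
      _ = (c ^ 2 * n) * (E + 2 * t * A + t ^ 2 * B) := by ring
      _ = _ := by rw [hc2, one_mul]
  by_contra hcon
  push Not at hcon
  set D := A - E * m with hD
  have hDpos : 0 < D := by linarith
  set R := B - E * q with hR
  set ε := min (D / (|R| + 1)) (1 / (4 * (|m| + 1))) with hε
  have hR1 : 0 < |R| + 1 := by positivity
  have hm1 : 0 < |m| + 1 := by positivity
  have hεpos : 0 < ε := lt_min (by positivity) (by positivity)
  have hε1 : ε * (|R| + 1) ≤ D := by
    have := min_le_left (D / (|R| + 1)) (1 / (4 * (|m| + 1)))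
    rw [← hε, le_div_iff₀ hR1] at this
    exact this
  have hε2 : ε * (4 * (|m| + 1)) ≤ 1 := by
    have := min_le_right (D / (|R| + 1)) (1 / (4 * (|m| + 1)))
    rw [← hε, le_div_iff₀ (by positivity)] at this
    exact this
  have hmm : ε * m ≤ ε * |m| := mul_le_mul_of_nonneg_left (le_abs_self m) hεpos.le
  have hRR : ε * R ≤ ε * |R| := mul_le_mul_of_nonneg_left (le_abs_self R) hεpos.le
  have hpos : 0 < 1 + 2 * (-ε) * m + (-ε) ^ 2 * q := by
    have : 0 ≤ (-ε) ^ 2 * q := by positivity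
    nlinarith
  have h1 := hvar (-ε) hpos
  have h2 : 0 ≤ ε * (ε * R - 2 * D) := by
    rw [hR, hD]; linarith
  have h3 : 0 ≤ ε * R - 2 * D := nonneg_of_mul_nonneg_right h2 hεpos
  linarith

end main

section final

variable {d N : ℕ} {hw : (Fin d → ℤ) → ℝ}

local notation "⟪" x "," y "⟫" => inner ℝ x y

theorem Pop_perm (f : (Fin N → Fin d → ℝ) → ℂ)
    (hf : ∀ (σ : Equiv.Perm (Fin N)) (x : Fin N → Fin d → ℝ), f (x ∘ σ) = f x)
    (σ : Equiv.Perm (Fin N)) (j : Fin N) (x : Fin N → Fin d → ℝ) :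
    Pop j f (x ∘ σ) = Pop (σ j) f x := by
  simp only [Pop]
  congr 1
  funext y
  rw [← hf σ (Function.update x (σ j) y)]
  congr 1
  funext l
  by_cases h : l = j
  · subst h; simp
  · simp [h]

theorem Pop_periodic (f : (Fin N → Fin d → ℝ) → ℂ)
    (hf : ∀ (x : Fin N → Fin d → ℝ) (j : Fin N) (v : Fin d → ℤ),
      f (Function.update x j (x j + fun i => (v i : ℝ))) = f x)
    (j k : Fin N) (v : Fin d → ℤ) (x : Fin N → Fin d → ℝ) :
    Pop j f (Function.update x k (x k + fun i => (v i : ℝ))) = Pop j f x := by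
  by_cases h : k = j
  · subst h
    exact Pop_indep k f x _
  · simp only [Pop]
    congr 1
    funext y
    rw [Function.update_comm h, ← hf (Function.update x j y) k v, Function.update_of_ne h]

theorem kin_term {f : (Fin N → Fin d → ℝ) → ℂ} (hf : ContDiff ℝ (⊤ : ℕ∞) f) (j k : Fin N)
    (i : Fin d) :
    ∫ x in cube d N, ⟪pd k i f x, pd k i (Qop d N j f) x⟫ =
      ∫ x in cube d N, ‖pd k i (Qop d N j f) x‖ ^ 2 := by
  have e : ∀ x, pd k i (Qop d N j f) x = pd k i f x - pd k i (Pop j f) x := by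
    intro x
    have h1 := hf.differentiable (by simp) x
    have h2 := (Pop_contDiff j hf).differentiable (by simp) x
    have : HasFDerivAt (Qop d N j f) (fderiv ℝ f x - fderiv ℝ (Pop j f) x) x :=
      h1.hasFDerivAt.sub h2.hasFDerivAt
    simp [pd, this.fderiv]
  by_cases h : k = j
  · have e2 : ∀ x, pd k i (Qop d N j f) x = pd k i f x := by
      intro x
      rw [e, pd_Pop_eq j k i hf, if_pos h, sub_zero]
    simp_rw [e2, real_inner_self_eq_norm_sq]
  · have e2 : ∀ x, pd k i (Qop d N j f) x = Qop d N j (pd k i f) x := by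
      intro x
      rw [e, pd_Pop_eq j k i hf, if_neg h, Qop_eq]
    simp_rw [e2]
    exact int_inner_Q j (pd_cont k i hf)

theorem T_bound (h0 : ∀ k, 0 ≤ hw k) (hs : Summable hw) {f : (Fin N → Fin d → ℝ) → ℂ}
    (hf : Continuous f) (hn : ∫ x in cube d N, ‖f x‖ ^ 2 = 1) {j k : Fin N} (hjk : j ≠ k)
    {s : ℝ} (hs0 : 0 < s) :
    -(s / 2 * (∫ x in cube d N, ‖Qop d N k (Qop d N j f) x‖ ^ 2)
      + (∑' k, hw k) ^ 2 / (2 * s)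
      + (∑' k, hw k) / 2 * ((∫ x in cube d N, ‖Qop d N k f x‖ ^ 2)
        + ∫ x in cube d N, ‖Qop d N j f x‖ ^ 2)) ≤
    ∫ x in cube d N, wOf d hw (x j - x k) * ⟪Pop j f x, Qop d N j f x⟫ := by
  set w0 := ∑' k, hw k with hw0
  have hw0' : 0 ≤ w0 := tsum_nonneg h0
  have cP := Pop_cont j hf
  have cQ := Qop_cont j hf
  have cQQ := Qop_cont k cQ
  have cQP := Qop_cont k cP
  have cPQ := Pop_cont k cQ
  have cPP := Pop_cont k cP
  have cW := W_cont h0 hs j k (d := d)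
  -- third term vanishes
  have h3 : ∫ x in cube d N, wOf d hw (x j - x k) *
      ⟪Pop k (Pop j f) x, Pop k (Qop d N j f) x⟫ = 0 := by
    rw [int_weight_indep (j := k) cW cPP (Pop_indep k _) cPQ (Pop_indep k _)]
    simp_rw [Pop_W h0 hs hjk]
    rw [integral_const_mul, Pop_comm hjk.symm hf, Pop_Qop_comm hjk.symm hf,
      int_inner_PQ j (Pop_cont k hf) (Pop_cont k hf), mul_zero]
  have n1 : ∫ x in cube d N, ‖Pop j f x‖ ^ 2 ≤ 1 := hn ▸ int_P_le j hf
  have n2 : ∫ x in cube d N, ‖Qop d N k (Pop j f) x‖ ^ 2 ≤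
      ∫ x in cube d N, ‖Qop d N k f x‖ ^ 2 := by
    rw [← Pop_Qop_comm hjk hf]
    exact int_P_le j (Qop_cont k hf)
  have n3 : ∫ x in cube d N, ‖Pop k (Qop d N j f) x‖ ^ 2 ≤
      ∫ x in cube d N, ‖Qop d N j f x‖ ^ 2 := int_P_le k cQ
  have hW : ∀ (x : Fin N → Fin d → ℝ) (a b : ℂ), -(w0 * (‖a‖ * ‖b‖)) ≤
      wOf d hw (x j - x k) * ⟪a, b⟫ := by
    intro x a b
    have h1 : |wOf d hw (x j - x k) * ⟪a, b⟫| ≤ w0 * (‖a‖ * ‖b‖) := by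
      rw [abs_mul]
      exact mul_le_mul (w_abs_le h0 hs _) (abs_real_inner_le_norm a b) (abs_nonneg _) hw0'
    exact (abs_le.1 h1).1
  have pt : ∀ x : Fin N → Fin d → ℝ,
      -(s / 2) * ‖Qop d N k (Qop d N j f) x‖ ^ 2
      + -(w0 ^ 2 / (2 * s)) * ‖Pop j f x‖ ^ 2
      + -(w0 / 2) * ‖Qop d N k (Pop j f) x‖ ^ 2 + -(w0 / 2) * ‖Pop k (Qop d N j f) x‖ ^ 2
      + wOf d hw (x j - x k) * ⟪Pop k (Pop j f) x, Pop k (Qop d N j f) x⟫ ≤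
      wOf d hw (x j - x k) * ⟪Pop j f x, Qop d N j f x⟫ := by
    intro x
    have e : ⟪Pop j f x, Qop d N j f x⟫ = ⟪Pop j f x, Qop d N k (Qop d N j f) x⟫ +
        ⟪Qop d N k (Pop j f) x, Pop k (Qop d N j f) x⟫ +
        ⟪Pop k (Pop j f) x, Pop k (Qop d N j f) x⟫ := by
      have e1 : Qop d N k (Pop j f) x + Pop k (Pop j f) x = Pop j f x := by simp [Qop_eq k]
      have e2 : Qop d N k (Qop d N j f) x + Pop k (Qop d N j f) x = Qop d N j f x := by
        simp [Qop_eq k]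
      rw [add_assoc, ← inner_add_left, e1, ← inner_add_right, e2]
    rw [e, mul_add, mul_add]
    have a1 := hW x (Pop j f x) (Qop d N k (Qop d N j f) x)
    have a2 := hW x (Qop d N k (Pop j f) x) (Pop k (Qop d N j f) x)
    set p := ‖Pop j f x‖
    set q := ‖Qop d N k (Qop d N j f) x‖
    set u := ‖Qop d N k (Pop j f) x‖
    set v := ‖Pop k (Qop d N j f) x‖
    have b1 : w0 * (p * q) ≤ s / 2 * q ^ 2 + w0 ^ 2 / (2 * s) * p ^ 2 := by
      have : s / 2 * q ^ 2 + w0 ^ 2 / (2 * s) * p ^ 2 - w0 * (p * q)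
          = (s * q - w0 * p) ^ 2 / (2 * s) := by
        field_simp
        ring
      have h : 0 ≤ (s * q - w0 * p) ^ 2 / (2 * s) := by positivity
      linarith
    have b2 : w0 * (u * v) ≤ w0 / 2 * u ^ 2 + w0 / 2 * v ^ 2 := by
      nlinarith [mul_nonneg hw0' (sq_nonneg (u - v))]
    linarith
  have i1 : Integrable (fun x => -(s / 2) * ‖Qop d N k (Qop d N j f) x‖ ^ 2)
    (volume.restrict (cube d N)) := (int_cube (cQQ.norm.pow 2)).const_mul _
  have i2 : Integrable (fun x => -(w0 ^ 2 / (2 * s)) * ‖Pop j f x‖ ^ 2)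
    (volume.restrict (cube d N)) := (int_cube (cP.norm.pow 2)).const_mul _
  have i3 : Integrable (fun x => -(w0 / 2) * ‖Qop d N k (Pop j f) x‖ ^ 2)
    (volume.restrict (cube d N)) := (int_cube (cQP.norm.pow 2)).const_mul _
  have i4 : Integrable (fun x => -(w0 / 2) * ‖Pop k (Qop d N j f) x‖ ^ 2)
    (volume.restrict (cube d N)) := (int_cube (cPQ.norm.pow 2)).const_mul _
  have i5 : Integrable (fun x : Fin N → Fin d → ℝ => wOf d hw (x j - x k) *
      ⟪Pop k (Pop j f) x, Pop k (Qop d N j f) x⟫)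
    (volume.restrict (cube d N)) := int_cube (cW.mul (cPP.inner cPQ))
  have i6 : Integrable (fun x : Fin N → Fin d → ℝ => wOf d hw (x j - x k) *
      ⟪Pop j f x, Qop d N j f x⟫)
    (volume.restrict (cube d N)) := int_cube (cW.mul (cP.inner cQ))
  have h := integral_mono ((((i1.add i2).add i3).add i4).add i5) i6 pt
  have h5 := integral_add (((i1.add i2).add i3).add i4) i5
  have h6 := integral_add ((i1.add i2).add i3) i4
  have h7 := integral_add (i1.add i2) i3
  have h8 := integral_add i1 i2
  simp only [Pi.add_apply] at h h5 h6 h7 h8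
  rw [h5, h3, h6, h7, h8, integral_const_mul, integral_const_mul, integral_const_mul,
    integral_const_mul] at h
  refine le_trans ?_ h
  have m1 : w0 ^ 2 / (2 * s) * (∫ x in cube d N, ‖Pop j f x‖ ^ 2) ≤ w0 ^ 2 / (2 * s) * 1 :=
    mul_le_mul_of_nonneg_left n1 (by positivity)
  have m2 := mul_le_mul_of_nonneg_left n2 (by positivity : 0 ≤ w0 / 2)
  have m3 := mul_le_mul_of_nonneg_left n3 (by positivity : 0 ≤ w0 / 2)
  linarith

theorem V_cross (h0 : ∀ k, 0 ≤ hw k) (hs : Summable hw) {f : (Fin N → Fin d → ℝ) → ℂ}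
    (hf : Continuous f) (hn : ∫ x in cube d N, ‖f x‖ ^ 2 = 1) (j : Fin N)
    {s : ℝ} (hs0 : 0 < s) :
    -(∑ k, (s / 2 * (∫ x in cube d N, ‖Qop d N k (Qop d N j f) x‖ ^ 2)
      + (∑' k, hw k) ^ 2 / (2 * s)
      + (∑' k, hw k) / 2 * ((∫ x in cube d N, ‖Qop d N k f x‖ ^ 2)
        + ∫ x in cube d N, ‖Qop d N j f x‖ ^ 2))) ≤
    ∫ x in cube d N, Vtot d N (wOf d hw) x * ⟪Pop j f x, Qop d N j f x⟫ := by
  set B : Fin N → ℝ := fun k => (s / 2 * (∫ x in cube d N, ‖Qop d N k (Qop d N j f) x‖ ^ 2)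
      + (∑' k, hw k) ^ 2 / (2 * s)
      + (∑' k, hw k) / 2 * ((∫ x in cube d N, ‖Qop d N k f x‖ ^ 2)
        + ∫ x in cube d N, ‖Qop d N j f x‖ ^ 2)) with hB
  have hw0' : 0 ≤ ∑' k, hw k := tsum_nonneg h0
  have nn : ∀ g : (Fin N → Fin d → ℝ) → ℂ, 0 ≤ ∫ x in cube d N, ‖g x‖ ^ 2 :=
    fun g => integral_nonneg fun x => by positivity
  have hB0 : ∀ k, 0 ≤ B k := fun k => by
    have := nn (Qop d N k (Qop d N j f))
    have := nn (Qop d N k f)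
    have := nn (Qop d N j f)
    simp only [hB]
    positivity
  have cP := Pop_cont j hf
  have cQ := Qop_cont j hf
  let T : Fin N → Fin N → ℝ := fun a b =>
    ∫ x in cube d N, wOf d hw (x a - x b) * ⟪Pop j f x, Qop d N j f x⟫
  have hT1 : ∀ k, k ≠ j → -B k ≤ T j k := fun k hk => T_bound h0 hs hf hn hk.symm hs0
  have hT2 : ∀ k, k ≠ j → -B k ≤ T k j := fun k hk => by
    have := hT1 k hk
    have e : T k j = T j k := by
      simp only [T]
      congr 1
      funext x
      rw [w_neg h0 hs]
    rw [e]
    exact this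
  have hT3 : T j j = 0 := by
    simp only [T, sub_self]
    rw [integral_const_mul, int_inner_PQ j hf hf, mul_zero]
  have hT4 : ∀ a b, a ≠ j → b ≠ j → T a b = 0 := by
    intro a b ha hb
    have hi : Indep j (fun x : Fin N → Fin d → ℝ => (wOf d hw (x a - x b)) • Pop j f x) := by
      intro x y
      simp only [Function.update_of_ne ha, Function.update_of_ne hb, Pop_indep j f x y]
    have hc : Continuous (fun x : Fin N → Fin d → ℝ => (wOf d hw (x a - x b)) • Pop j f x) :=
      (W_cont h0 hs a b).smul cP
    have := int_inner_indep hc hi cQ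
    rw [Pop_Qop_self j hf] at this
    simp only [real_inner_smul_left, inner_zero_right, mul_zero, integral_zero] at this
    exact this
  have hT : ∀ a b, (if a = j then -B b else 0) + (if b = j then -B a else 0) ≤ T a b := by
    intro a b
    by_cases ha : a = j <;> by_cases hb : b = j
    · subst ha; subst hb
      have := hB0 b
      simp only [if_true, hT3]; linarith
    · subst ha; simpa [hb] using hT1 b hb
    · subst hb; simpa [ha] using hT2 a ha
    · simp [ha, hb, hT4 a b ha hb]
  have hsum : -(2 * ∑ k, B k) ≤ ∑ a, ∑ b, T a b := by
    refine le_trans (le_of_eq ?_) (Finset.sum_le_sum fun a _ => Finset.sum_le_sum fun b _ => hT a b)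
    simp only [Finset.sum_add_distrib]
    rw [Finset.sum_comm]
    simp
    ring
  have cI : Continuous fun x => ⟪Pop j f x, Qop d N j f x⟫ := cP.inner cQ
  have cT : ∀ a b, Continuous fun x : Fin N → Fin d → ℝ =>
      wOf d hw (x a - x b) * ⟪Pop j f x, Qop d N j f x⟫ := fun a b => (W_cont h0 hs a b).mul cI
  have cT2 : ∀ a, Continuous fun x : Fin N → Fin d → ℝ =>
      ∑ b, wOf d hw (x a - x b) * ⟪Pop j f x, Qop d N j f x⟫ :=
    fun a => continuous_finsetSum _ fun b _ => cT a b
  have cT3 : Continuous fun x : Fin N → Fin d → ℝ =>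
      ∑ a, ∑ b, wOf d hw (x a - x b) * ⟪Pop j f x, Qop d N j f x⟫ :=
    continuous_finsetSum _ fun a _ => cT2 a
  have e : ∀ x, Vtot d N (wOf d hw) x * ⟪Pop j f x, Qop d N j f x⟫ =
      (1 / 2) * (∑ a, ∑ b, wOf d hw (x a - x b) * ⟪Pop j f x, Qop d N j f x⟫)
      - (N * (∑' k, hw k) / 2) * ⟪Pop j f x, Qop d N j f x⟫ := by
    intro x
    have h2 := Vtot_two h0 hs x
    simp_rw [← Finset.sum_mul]
    have : Vtot d N (wOf d hw) x =
      ((∑ j, ∑ k, wOf d hw (x j - x k)) - N * ∑' k, hw k) / 2 := by linarith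
    rw [this]; ring
  simp_rw [e]
  rw [integral_sub ((int_cube cT3).const_mul _) ((int_cube cI).const_mul _), integral_const_mul,
    integral_const_mul, int_inner_PQ j hf hf, integral_finsetSum _ fun a _ => int_cube (cT2 a)]
  simp_rw [integral_finsetSum _ fun b _ => int_cube (cT _ b)]
  simp only [T] at hsum
  linarith

end final

section last

variable {d N : ℕ} {hw : (Fin d → ℤ) → ℝ}

local notation "⟪" x "," y "⟫" => inner ℝ x y

/-- lower bound for the energy form between `f` and `Q_j f` -/
theorem eden_Q_ge (h0 : ∀ k, 0 ≤ hw k) (hs : Summable hw) {lam : ℝ} (hl : 0 < lam)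
    {f : (Fin N → Fin d → ℝ) → ℂ} (hf : ContDiff ℝ (⊤ : ℕ∞) f)
    (hn : ∫ x in cube d N, ‖f x‖ ^ 2 = 1) (j : Fin N) {s : ℝ} (hs0 : 0 < s) :
    (∑ k, 1 / 2 ^ d * (∫ x in cube d N, ‖Qop d N k (Qop d N j f) x‖ ^ 2)) +
      lam * (((hw 0 * (N : ℝ) ^ 2 - N * ∑' k, hw k) / 2) *
        (∫ x in cube d N, ‖Qop d N j f x‖ ^ 2) -
        ∑ k, (s / 2 * (∫ x in cube d N, ‖Qop d N k (Qop d N j f) x‖ ^ 2)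
      + (∑' k, hw k) ^ 2 / (2 * s)
      + (∑' k, hw k) / 2 * ((∫ x in cube d N, ‖Qop d N k f x‖ ^ 2)
        + ∫ x in cube d N, ‖Qop d N j f x‖ ^ 2))) ≤
    ∫ x in cube d N, eden lam (wOf d hw) f (Qop d N j f) x := by
  have hQ := Qop_contDiff j hf
  have cV := Vtot_cont (N := N) (w_cont h0 hs)
  have cQ := hQ.continuous
  have cP := Pop_cont j hf.continuous
  have c1 : ∀ (k : Fin N) (i : Fin d), Continuous fun x => ⟪pd k i f x, pd k i (Qop d N j f) x⟫ :=
    fun k i => (pd_cont k i hf).inner (pd_cont k i hQ)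
  have c2 : ∀ (k : Fin N), Continuous fun x => ∑ i, ⟪pd k i f x, pd k i (Qop d N j f) x⟫ :=
    fun k => continuous_finsetSum _ fun i _ => c1 k i
  have c3 : Continuous fun x => ∑ k, ∑ i, ⟪pd k i f x, pd k i (Qop d N j f) x⟫ :=
    continuous_finsetSum _ fun k _ => c2 k
  have c4 : Continuous fun x => Vtot d N (wOf d hw) x * ⟪Pop j f x, Qop d N j f x⟫ :=
    cV.mul (cP.inner cQ)
  have c5 : Continuous fun x => Vtot d N (wOf d hw) x * ‖Qop d N j f x‖ ^ 2 :=
    cV.mul (cQ.norm.pow 2)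
  have c6 : Continuous fun x => ‖Qop d N j f x‖ ^ 2 := cQ.norm.pow 2
  have c7 : Continuous fun x => Vtot d N (wOf d hw) x * ‖Qop d N j f x‖ ^ 2 +
    Vtot d N (wOf d hw) x * ⟪Pop j f x, Qop d N j f x⟫ := c5.add c4
  have e : ∀ x, eden lam (wOf d hw) f (Qop d N j f) x =
      (∑ k, ∑ i, ⟪pd k i f x, pd k i (Qop d N j f) x⟫) +
      lam * (Vtot d N (wOf d hw) x * ‖Qop d N j f x‖ ^ 2 +
        Vtot d N (wOf d hw) x * ⟪Pop j f x, Qop d N j f x⟫) := by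
    intro x
    have h1 : ⟪f x, Qop d N j f x⟫ = ‖Qop d N j f x‖ ^ 2 + ⟪Pop j f x, Qop d N j f x⟫ := by
      rw [← real_inner_self_eq_norm_sq, ← inner_add_left]
      congr 1
      simp [Qop_eq]
    unfold eden
    rw [h1]
    ring
  have hkin : ∫ x in cube d N, ∑ k, ∑ i, ⟪pd k i f x, pd k i (Qop d N j f) x⟫ =
      ∑ k, ∑ i, ∫ x in cube d N, ‖pd k i (Qop d N j f) x‖ ^ 2 := by
    rw [integral_finsetSum _ fun k _ => int_cube (c2 k)]
    refine Finset.sum_congr rfl fun k _ => ?_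
    rw [integral_finsetSum _ fun i _ => int_cube (c1 k i)]
    exact Finset.sum_congr rfl fun i _ => kin_term hf j k i
  simp_rw [e]
  rw [integral_add (int_cube c3) ((int_cube c7).const_mul _), integral_const_mul,
    integral_add (int_cube c5) (int_cube c4), hkin]
  refine add_le_add (Finset.sum_le_sum fun k _ => ?_)
    (mul_le_mul_of_nonneg_left ?_ hl.le)
  · have := poincare_N k hQ
    rw [one_div, inv_mul_le_iff₀ (by positivity)]
    exact this
  · have h1 := V_cross h0 hs hf.continuous hn j hs0
    have h2 : ((hw 0 * (N : ℝ) ^ 2 - N * ∑' k, hw k) / 2) *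
        (∫ x in cube d N, ‖Qop d N j f x‖ ^ 2) ≤
        ∫ x in cube d N, Vtot d N (wOf d hw) x * ‖Qop d N j f x‖ ^ 2 := by
      rw [← integral_const_mul]
      exact integral_mono ((int_cube c6).const_mul _) (int_cube c5)
        fun x => mul_le_mul_of_nonneg_right (Vtot_ge h0 hs x) (by positivity)
    linarith

/-- sum over `j` of the previous bound, combined with the variational inequality -/
theorem second_bound (h0 : ∀ k, 0 ≤ hw k) (hs : Summable hw) {lam : ℝ} (hl : 0 < lam)
    {f : (Fin N → Fin d → ℝ) → ℂ} (hf : IsAdmissible d N f)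
    (hmin : energy d N lam (wOf d hw) f = GSE d N lam (wOf d hw)) {s : ℝ} (hs0 : 0 < s) :
    1 / 2 ^ d * NplusSqExp d N f +
      lam * (((hw 0 * (N : ℝ) ^ 2 - N * ∑' k, hw k) / 2) * NplusExp d N f -
        (s / 2 * NplusSqExp d N f + N ^ 2 * ((∑' k, hw k) ^ 2 / (2 * s))
          + (∑' k, hw k) * N * NplusExp d N f)) ≤
    GSE d N lam (wOf d hw) * NplusExp d N f := by
  have hQ := fun j => Qop_contDiff j hf.1
  have hv := variation h0 hs hl hf hmin (g := fun x => ∑ j, Qop d N j f x)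
    (ContDiff.sum fun j _ => hQ j)
    (by
      intro x k v
      refine Finset.sum_congr rfl fun j _ => ?_
      simp only [Qop_eq]
      rw [Pop_periodic f hf.2.1, hf.2.1])
    (by
      intro σ x
      simp only [Qop_eq]
      rw [← Equiv.sum_comp σ fun j => f x - Pop j f x]
      refine Finset.sum_congr rfl fun j _ => ?_
      rw [Pop_perm f hf.2.2.1, hf.2.2.1])
  have cI : ∀ j, Continuous fun x => ⟪f x, Qop d N j f x⟫ :=
    fun j => hf.1.continuous.inner (hQ j).continuous
  simp_rw [eden_sum lam (wOf d hw) f hQ, inner_sum] at hv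
  rw [integral_finsetSum _ fun j _ => int_cube (eden_cont lam (w_cont h0 hs) hf.1 (hQ j)),
    integral_finsetSum _ fun j _ => int_cube (cI j)] at hv
  simp_rw [int_inner_Q _ hf.1.continuous] at hv
  refine le_trans (le_trans (le_of_eq ?_) (Finset.sum_le_sum fun j _ =>
    eden_Q_ge h0 hs hl hf.1 hf.2.2.2 j hs0)) hv
  have hX : NplusSqExp d N f =
      ∑ j, ∑ k, ∫ x in cube d N, ‖Qop d N k (Qop d N j f) x‖ ^ 2 := Finset.sum_comm
  rw [hX]
  unfold NplusExp
  simp only [Finset.sum_add_distrib, ← Finset.mul_sum, Finset.sum_sub_distrib,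
    Finset.sum_const, Finset.card_univ, Fintype.card_fin, nsmul_eq_mul]
  ring

end last

/-- **Lemma 3.2 (Number of excited particles).** There is a constant `C > 0`, depending only
on `d` and `ŵ`, such that for every `N ≥ 2`, every `0 < λ ≤ 2/N`, and every admissible
minimizer `Ψ` of the energy, `⟨𝒩₊⟩_Ψ ≤ C` and `⟨𝒩₊²⟩_Ψ ≤ C`. -/
theorem excited_particles_bound (d : ℕ) (hd : 1 ≤ d)
    (hw : (Fin d → ℤ) → ℝ) (hw_nonneg : ∀ k, 0 ≤ hw k)
    (hw_even : ∀ k, hw (-k) = hw k) (hw_summable : Summable hw) :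
    ∃ C : ℝ, 0 < C ∧
      ∀ N : ℕ, 2 ≤ N → ∀ lam : ℝ, 0 < lam → lam ≤ 2 / (N : ℝ) →
        ∀ Ψ : (Fin N → Fin d → ℝ) → ℂ, IsAdmissible d N Ψ →
          energy d N lam (wOf d hw) Ψ = GSE d N lam (wOf d hw) →
            NplusExp d N Ψ ≤ C ∧ NplusSqExp d N Ψ ≤ C := by

  set w0 := ∑' k, hw k with hw0
  have hw0' : 0 ≤ w0 := tsum_nonneg hw_nonneg
  have h00 := hw_nonneg 0
  have hD : (0 : ℝ) < 2 ^ d := by positivity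
  have hC1 : 0 ≤ 2 ^ d * w0 := by positivity
  have hC2 : 0 ≤ 10 * (2 ^ d) ^ 2 * w0 ^ 2 := by positivity
  refine ⟨2 ^ d * w0 + 10 * (2 ^ d) ^ 2 * w0 ^ 2 + 1, by linarith, ?_⟩
  intro N hN lam hl hl2 Ψ hΨ hmin
  have hN0 : (0 : ℝ) < N := by
    have : 0 < N := by omega
    exact_mod_cast this
  have hlN : lam * N ≤ 2 := by rwa [le_div_iff₀ hN0] at hl2
  set E := GSE d N lam (wOf d hw) with hE
  set Vm := (hw 0 * (N : ℝ) ^ 2 - N * w0) / 2 with hVm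
  have hEV : E - lam * Vm ≤ w0 := by
    have h1 := GSE_upper (N := N) hw_nonneg hw_summable hl
    rw [← hE] at h1
    have h2 : lam * (((N : ℝ) ^ 2 - N) * hw 0 / 2) - lam * Vm = lam * N / 2 * (w0 - hw 0) := by
      rw [hVm]; ring
    have h3 : lam * N / 2 * w0 ≤ 1 * w0 :=
      mul_le_mul_of_nonneg_right (by linarith) hw0'
    have h4 : 0 ≤ lam * N / 2 * hw 0 := by positivity
    nlinarith
  set n := NplusExp d N Ψ with hn
  set X := NplusSqExp d N Ψ with hX
  have hn0 : 0 ≤ n := Finset.sum_nonneg fun j _ => integral_nonneg fun x => by positivity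
  have first : n ≤ 2 ^ d * w0 := by
    have h1 := energy_ge hw_nonneg hw_summable hl hΨ.1
    rw [hΨ.2.2.2, hmin, mul_one, ← hw0, ← hVm] at h1
    have h2 : n ≤ ∑ k : Fin N, 2 ^ d * ∑ i : Fin d, ∫ x in cube d N, ‖pd k i Ψ x‖ ^ 2 :=
      Finset.sum_le_sum fun k _ => poincare_N k hΨ.1
    rw [← Finset.mul_sum] at h2
    refine h2.trans (mul_le_mul_of_nonneg_left ?_ hD.le)
    linarith
  refine ⟨by linarith, ?_⟩
  have hs0 : (0 : ℝ) < N / (2 * 2 ^ d) := by positivity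
  have h := second_bound hw_nonneg hw_summable hl hΨ hmin hs0
  rw [← hE, ← hn, ← hX, ← hw0, ← hVm] at h
  have hX0 : 0 ≤ X := Finset.sum_nonneg fun j _ => Finset.sum_nonneg fun k _ =>
    integral_nonneg fun x => by positivity
  have a1 : (E - lam * Vm) * n ≤ w0 * n := mul_le_mul_of_nonneg_right hEV hn0
  have a2 : lam * (N / (2 * 2 ^ d) / 2 * X) ≤ 1 / (2 * 2 ^ d) * X := by
    have : lam * (N / (2 * 2 ^ d) / 2 * X) = lam * N * (X / (4 * 2 ^ d)) := by
      field_simp; ring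
    rw [this]
    have h5 : lam * N * (X / (4 * 2 ^ d)) ≤ 2 * (X / (4 * 2 ^ d)) :=
      mul_le_mul_of_nonneg_right hlN (by positivity)
    refine h5.trans (le_of_eq ?_)
    field_simp; ring
  have a3 : lam * (N ^ 2 * (w0 ^ 2 / (2 * (N / (2 * 2 ^ d))))) ≤ 2 * 2 ^ d * w0 ^ 2 := by
    have : lam * (N ^ 2 * (w0 ^ 2 / (2 * (N / (2 * 2 ^ d))))) = lam * N * (2 ^ d * w0 ^ 2) := by
      field_simp
    rw [this, mul_assoc 2]
    exact mul_le_mul_of_nonneg_right hlN (by positivity)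
  have a4 : lam * (w0 * N * n) ≤ 2 * w0 * n := by
    have : lam * (w0 * N * n) = lam * N * (w0 * n) := by ring
    rw [this, mul_assoc 2]
    exact mul_le_mul_of_nonneg_right hlN (by positivity)
  have a5 : w0 * n ≤ 2 ^ d * w0 ^ 2 := by
    have := mul_le_mul_of_nonneg_left first hw0'
    linarith
  have a6 : 1 / (2 * 2 ^ d) * X ≤ 5 * 2 ^ d * w0 ^ 2 := by
    have e1 : 1 / 2 ^ d * X = 1 / (2 * 2 ^ d) * X + 1 / (2 * 2 ^ d) * X := by
      field_simp; ring
    rw [e1] at h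
    linarith
  have a7 : X ≤ 10 * (2 ^ d) ^ 2 * w0 ^ 2 := by
    have := mul_le_mul_of_nonneg_left a6 (by positivity : (0 : ℝ) ≤ 2 * 2 ^ d)
    have e2 : 2 * 2 ^ d * (1 / (2 * 2 ^ d) * X) = X := by field_simp
    rw [e2] at this
    linarith
  linarith
end
end

section
/- For every integer N ≥ 2, every λ > 0, and every admissible Ψ whose energy satisfies ℰ_{λ,N}(Ψ) ≤ (λ/2) N (N−1) ŵ(0), one has the explicit bound ⟨𝒩₊⟩_Ψ ≤ λ N ( w(0) − ŵ(0) ) / ( 2 (2π)² ). -/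
open MeasureTheory Real

noncomputable section

/-- A probability measure carried by a compact set. -/
structure NiceM {X : Type*} [TopologicalSpace X] [MeasurableSpace X] (μ : Measure X) : Prop where
  prob : IsProbabilityMeasure μ
  cpt : ∃ K : Set X, IsCompact K ∧ ∀ᵐ x ∂μ, x ∈ K

namespace NiceM

theorem integrable {X E : Type*} [TopologicalSpace X] [MeasurableSpace X] [OpensMeasurableSpace X]
    [SecondCountableTopology X] [NormedAddCommGroup E]
    {μ : Measure X} (h : NiceM μ) {f : X → E} (hf : Continuous f) :
    Integrable f μ := by
  obtain ⟨hp, K, hK, hae⟩ := h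
  obtain ⟨C, hC⟩ := hK.exists_bound_of_continuousOn hf.continuousOn
  refine Integrable.of_bound hf.aestronglyMeasurable C ?_
  filter_upwards [hae] with x hx using hC x hx

theorem cont {X Y E : Type*} [TopologicalSpace X] [FirstCountableTopology X]
    [LocallyCompactSpace X] [TopologicalSpace Y] [MeasurableSpace Y] [OpensMeasurableSpace Y]
    [SecondCountableTopology Y] [NormedAddCommGroup E] [NormedSpace ℝ E]
    {μ : Measure Y} (h : NiceM μ) {f : X → Y → E} (hf : Continuous fun p : X × Y => f p.1 p.2) :
    Continuous fun x => ∫ y, f x y ∂μ := by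
  obtain ⟨hp, K, hK, hae⟩ := h
  have := continuous_parametric_integral_of_continuous (μ := μ) (f := f) hf hK
  rwa [Measure.restrict_eq_self_of_ae_mem hae] at this

theorem prod {X Y : Type*} [TopologicalSpace X] [MeasurableSpace X] [TopologicalSpace Y]
    [MeasurableSpace Y] {μ : Measure X} {ν : Measure Y} (h : NiceM μ) (h' : NiceM ν) :
    NiceM (μ.prod ν) := by
  obtain ⟨hp, K, hK, hae⟩ := h
  obtain ⟨hp', K', hK', hae'⟩ := h'
  refine ⟨inferInstance, K ×ˢ K', hK.prod hK', ?_⟩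
  have h1 := Measure.quasiMeasurePreserving_fst (μ := μ) (ν := ν) |>.ae hae
  have h2 := Measure.quasiMeasurePreserving_snd (μ := μ) (ν := ν) |>.ae hae'
  filter_upwards [h1, h2] with p a b using ⟨a, b⟩

theorem pi {n : ℕ} {X : Type*} [TopologicalSpace X] [MeasurableSpace X]
    {μ : Measure X} (h : NiceM μ) :
    NiceM (Measure.pi fun _ : Fin n => μ) := by
  obtain ⟨hp, K, hK, hae⟩ := h
  refine ⟨inferInstance, Set.univ.pi fun _ => K, isCompact_univ_pi fun _ => hK, ?_⟩
  have : ∀ i : Fin n, ∀ᵐ x ∂(Measure.pi fun _ : Fin n => μ), x i ∈ K := fun i =>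
    (Measure.quasiMeasurePreserving_eval (fun _ : Fin n => μ) i).ae hae
  filter_upwards [ae_all_iff.2 this] with x hx i _ using hx i

end NiceM

/-- variance -/
def vr {X : Type*} [MeasurableSpace X] (μ : Measure X) (f : X → ℂ) : ℝ :=
  (∫ x, ‖f x‖ ^ 2 ∂μ) - ‖∫ x, f x ∂μ‖ ^ 2

theorem vr_eq {X : Type*} [TopologicalSpace X] [MeasurableSpace X] [OpensMeasurableSpace X]
    [SecondCountableTopology X] {μ : Measure X} (h : NiceM μ) {f : X → ℂ} (hf : Continuous f) :
    ∫ x, ‖f x - ∫ y, f y ∂μ‖ ^ 2 ∂μ = vr μ f := by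
  have hpr := h.prob
  set c := ∫ y, f y ∂μ with hc
  have e : ∀ x, ‖f x - c‖ ^ 2 = ‖f x‖ ^ 2 - 2 * (f x * (starRingEnd ℂ) c).re + ‖c‖ ^ 2 := by
    intro x
    rw [← Complex.normSq_eq_norm_sq, ← Complex.normSq_eq_norm_sq, ← Complex.normSq_eq_norm_sq,
      Complex.normSq_sub]; ring
  have i1 : Integrable (fun x => ‖f x‖ ^ 2) μ := h.integrable (by fun_prop)
  have i2 : Integrable (fun x => f x * (starRingEnd ℂ) c) μ := h.integrable (by fun_prop)
  have i3 : Integrable (fun x => 2 * (f x * (starRingEnd ℂ) c).re) μ := h.integrable (by fun_prop)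
  simp_rw [e]
  rw [integral_add (f := fun x => ‖f x‖ ^ 2 - 2 * (f x * (starRingEnd ℂ) c).re) (i1.sub i3) (integrable_const _), integral_sub i1 i3, integral_const_mul]
  have : ∫ x, (f x * (starRingEnd ℂ) c).re ∂μ = ‖c‖ ^ 2 := by
    have h2 := integral_re i2
    simp only [RCLike.re_eq_complex_re] at h2
    rw [h2, integral_mul_const, ← hc, Complex.mul_conj, Complex.normSq_eq_norm_sq]
    simp [← Complex.ofReal_pow]
  rw [this]
  simp [vr, ← hc]; ring

theorem vr_nonneg {X : Type*} [TopologicalSpace X] [MeasurableSpace X] [OpensMeasurableSpace X]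
    [SecondCountableTopology X] {μ : Measure X} (h : NiceM μ) {f : X → ℂ} (hf : Continuous f) :
    0 ≤ vr μ f := by
  rw [← vr_eq h hf]; exact integral_nonneg fun _ => by positivity

theorem vr_avg {X Y : Type*}
    [TopologicalSpace X] [MeasurableSpace X] [OpensMeasurableSpace X]
    [SecondCountableTopology X] [LocallyCompactSpace X]
    [TopologicalSpace Y] [MeasurableSpace Y] [OpensMeasurableSpace Y]
    [SecondCountableTopology Y] [LocallyCompactSpace Y]
    {μ : Measure X} (h : NiceM μ) {ν : Measure Y} (h' : NiceM ν)
    {f : X → Y → ℂ} (hf : Continuous fun p : X × Y => f p.1 p.2) :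
    vr μ (fun x => ∫ y, f x y ∂ν) ≤ ∫ y, vr μ (fun x => f x y) ∂ν := by
  have := h.prob
  have := h'.prob
  have hf' : Continuous fun p : Y × X => f p.2 p.1 := hf.comp continuous_swap
  have hm : Continuous fun y => ∫ x, f x y ∂μ := h.cont hf'
  have hg : Continuous fun p : X × Y => f p.1 p.2 - ∫ x, f x p.2 ∂μ :=
    hf.sub (hm.comp continuous_snd)
  rw [← vr_eq h (h'.cont hf)]
  have hx : ∀ x, Continuous (f x) := fun x => hf.comp (by fun_prop : Continuous fun y => (x, y))
  have hy : ∀ y, Continuous (fun x => f x y) := fun y => hf.comp (by fun_prop : Continuous fun x => (x, y))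
  have e1 : ∀ y, vr μ (fun x => f x y) = ∫ x, ‖f x y - ∫ x', f x' y ∂μ‖ ^ 2 ∂μ :=
    fun y => (vr_eq h (hy y)).symm
  simp_rw [e1]
  have sw : ∫ x, ∫ y, f x y ∂ν ∂μ = ∫ y, ∫ x, f x y ∂μ ∂ν :=
    integral_integral_swap ((h.prod h').integrable hf)
  rw [integral_integral_swap (μ := ν) (ν := μ) (f := fun y x => ‖f x y - ∫ x', f x' y ∂μ‖ ^ 2)
    ((h'.prod h).integrable (by
      have := (hg.comp continuous_swap).norm.pow 2
      exact this))]
  refine integral_mono (h.integrable (((h'.cont hf).sub continuous_const).norm.pow 2))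
    (h.integrable (h'.cont (hg.norm.pow 2))) fun x => ?_
  simp only
  rw [sw, ← integral_sub (h'.integrable (hx x)) (h'.integrable hm)]
  have := vr_nonneg h' (f := fun y => f x y - ∫ x', f x' y ∂μ) ((hx x).sub hm)
  unfold vr at this
  linarith

theorem integral_update {n : ℕ} {X E : Type*} [TopologicalSpace X] [MeasurableSpace X]
    [BorelSpace X] [SecondCountableTopology X]
    [NormedAddCommGroup E] [NormedSpace ℝ E]
    {μ : Measure X} (h : NiceM μ) (j : Fin n) {F : (Fin n → X) → E} (hF : Continuous F) :
    ∫ x, ∫ y, F (Function.update x j y) ∂μ ∂(Measure.pi fun _ : Fin n => μ) =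
      ∫ x, F x ∂(Measure.pi fun _ : Fin n => μ) := by
  have := h.prob
  have hc : Continuous fun p : (Fin n → X) × X => Function.update p.1 j p.2 :=
    continuous_fst.update j continuous_snd
  have hmp : MeasurePreserving (fun p : (Fin n → X) × X => Function.update p.1 j p.2)
      ((Measure.pi fun _ : Fin n => μ).prod μ) (Measure.pi fun _ : Fin n => μ) := by
    refine ⟨hc.measurable, ?_⟩
    symm
    refine Measure.pi_eq fun s hs => ?_
    rw [Measure.map_apply hc.measurable (MeasurableSet.univ_pi hs)]
    have : (fun p : (Fin n → X) × X => Function.update p.1 j p.2) ⁻¹' (Set.univ.pi s) =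
        (Set.univ.pi (Function.update s j Set.univ)) ×ˢ (s j) := by
      ext ⟨x, y⟩
      simp only [Set.mem_preimage, Set.mem_pi, Set.mem_univ, true_imp_iff, Set.mem_prod]
      constructor
      · intro H
        refine ⟨fun i => ?_, by simpa using H j⟩
        by_cases hi : i = j
        · subst hi; simp
        · simpa [hi] using H i
      · rintro ⟨H, H'⟩ i
        by_cases hi : i = j
        · subst hi; simpa using H'
        · simpa [hi] using H i
    rw [this, Measure.prod_prod, Measure.pi_pi,
      ← Finset.prod_erase_mul _ _ (Finset.mem_univ j),
      ← Finset.prod_erase_mul (Finset.univ) (fun i => μ (s i)) (Finset.mem_univ j)]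
    simp only [Function.update_self, measure_univ, mul_one]
    congr 1
    refine Finset.prod_congr rfl fun i hi => ?_
    rw [Function.update_of_ne (Finset.ne_of_mem_erase hi)]
  have i2 : Integrable (fun p : (Fin n → X) × X => F (Function.update p.1 j p.2))
      ((Measure.pi fun _ : Fin n => μ).prod μ) := (h.pi.prod h).integrable (hF.comp hc)
  rw [← integral_prod (f := fun p : (Fin n → X) × X => F (Function.update p.1 j p.2)) i2]
  have h3 := integral_map (μ := (Measure.pi fun _ : Fin n => μ).prod μ) hc.measurable.aemeasurable
    (hF.aestronglyMeasurable)
  rw [hmp.map_eq] at h3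
  exact h3.symm


theorem vr_cont {X Y : Type*}
    [TopologicalSpace X] [FirstCountableTopology X] [LocallyCompactSpace X]
    [TopologicalSpace Y] [MeasurableSpace Y] [OpensMeasurableSpace Y]
    [SecondCountableTopology Y]
    {ν : Measure Y} (h' : NiceM ν)
    {f : X → Y → ℂ} (hf : Continuous fun p : X × Y => f p.1 p.2) :
    Continuous fun x => vr ν (f x) :=
  (h'.cont (hf.norm.pow 2)).sub ((h'.cont hf).norm.pow 2)

theorem integral_cons {n : ℕ} {E : Type*}
    [NormedAddCommGroup E] [NormedSpace ℝ E]
    {μ : Measure ℝ} (h : NiceM μ) {F : (Fin (n + 1) → ℝ) → E} (hF : Continuous F) :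
    ∫ x, F x ∂(Measure.pi fun _ : Fin (n + 1) => μ) =
      ∫ t, ∫ y, F (Fin.cons t y) ∂(Measure.pi fun _ : Fin n => μ) ∂μ := by
  have := h.prob
  have hc : Continuous fun p : ℝ × (Fin n → ℝ) => (Fin.cons p.1 p.2 : Fin (n + 1) → ℝ) := by
    fun_prop
  rw [← ((measurePreserving_piFinSuccAbove (fun _ : Fin (n + 1) => μ) 0).symm).integral_comp']
  have i2 := (h.prod (h.pi (n := n))).integrable (hF.comp hc)
  have := integral_prod _ i2
  simp only [Function.comp_def] at this
  rw [← this]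
  simp [MeasurableEquiv.piFinSuccAbove_symm_apply, Fin.insertNthEquiv]

theorem efron {μ : Measure ℝ} (h : NiceM μ) : ∀ (n : ℕ) (f : (Fin n → ℝ) → ℂ), Continuous f →
    vr (Measure.pi fun _ : Fin n => μ) f ≤
      ∑ i, ∫ x, vr μ (fun t => f (Function.update x i t)) ∂(Measure.pi fun _ : Fin n => μ) := by
  have hpr := h.prob
  intro n
  induction n with
  | zero =>
    intro f hf
    have : f = fun _ => f 0 := by ext x; rw [Subsingleton.elim x 0]
    rw [this]
    simp [vr]
  | succ n ih =>
    intro f hf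
    have hc : Continuous fun p : ℝ × (Fin n → ℝ) => (Fin.cons p.1 p.2 : Fin (n + 1) → ℝ) := by
      fun_prop
    have hfc : Continuous fun p : ℝ × (Fin n → ℝ) => f (Fin.cons p.1 p.2) := hf.comp hc
    have hfc' : Continuous fun p : (Fin n → ℝ) × ℝ => f (Fin.cons p.2 p.1) :=
      hfc.comp continuous_swap
    have hup : ∀ i, Continuous fun x => vr μ (fun t => f (Function.update x i t)) := fun i =>
      vr_cont h (hf.comp (continuous_fst.update i continuous_snd))
    have hup' : ∀ (i : Fin n), Continuous fun p : ℝ × (Fin n → ℝ) =>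
        vr μ (fun t => f (Fin.cons p.1 (Function.update p.2 i t))) := fun i =>
      vr_cont h (hf.comp (hc.comp
        ((continuous_fst.comp continuous_fst).prodMk
          ((continuous_snd.comp continuous_fst).update i continuous_snd))))
    have split : vr (Measure.pi fun _ : Fin (n + 1) => μ) f =
        (∫ t, vr (Measure.pi fun _ : Fin n => μ) (fun y => f (Fin.cons t y)) ∂μ) +
        vr μ (fun t => ∫ y, f (Fin.cons t y) ∂(Measure.pi fun _ : Fin n => μ)) := by
      unfold vr
      rw [integral_cons h (F := fun x => ‖f x‖ ^ 2) (hf.norm.pow 2), integral_cons h hf, integral_sub]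
      · ring
      · exact h.integrable (h.pi.cont (hfc.norm.pow 2))
      · exact h.integrable ((h.pi.cont hfc).norm.pow 2)
    rw [split, Fin.sum_univ_succ, add_comm]
    refine add_le_add ?_ ?_
    · rw [integral_cons h (hup 0)]
      simp only [Fin.update_cons_zero, integral_const, probReal_univ, one_smul]
      exact vr_avg h h.pi hfc
    · have e : ∀ i : Fin n, ∫ x, vr μ (fun t => f (Function.update x i.succ t))
            ∂(Measure.pi fun _ : Fin (n + 1) => μ) = ∫ s, ∫ y, vr μ (fun t => f (Fin.cons s
              (Function.update y i t))) ∂(Measure.pi fun _ : Fin n => μ) ∂μ := by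
        intro i
        rw [integral_cons h (hup i.succ)]
        simp only [Fin.cons_update]
      simp_rw [e]
      rw [← integral_finsetSum _ fun i _ => h.integrable (h.pi.cont (hup' i))]
      refine integral_mono (h.integrable (vr_cont h.pi hfc))
        (h.integrable (continuous_finsetSum _ fun i _ => h.pi.cont (hup' i))) fun s => ?_
      exact ih (fun y => f (Fin.cons s y)) (hfc.comp (by fun_prop : Continuous fun y => (s, y)))

/-- Lebesgue measure on the unit interval. -/
def mu1 : Measure ℝ := volume.restrict (Set.Icc 0 1)

theorem mu1_nice : NiceM mu1 :=
  ⟨⟨by simp [mu1]⟩, Set.Icc 0 1, isCompact_Icc, ae_restrict_mem measurableSet_Icc⟩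

theorem wirtinger {f f' : ℝ → ℂ} (hf : ∀ x, HasDerivAt f (f' x) x) (hf' : Continuous f')
    (hp : f 1 = f 0) : (2 * π) ^ 2 * vr mu1 f ≤ ∫ t, ‖f' t‖ ^ 2 ∂mu1 := by
  have hfc : Continuous f := continuous_iff_continuousAt.2 fun x => (hf x).continuousAt
  have conv : ∀ {E : Type} [NormedAddCommGroup E] [NormedSpace ℝ E] (g : ℝ → E),
      ∫ t, g t ∂mu1 = ∫ t in (0 : ℝ)..1, g t := by
    intro E _ _ g
    rw [mu1, integral_Icc_eq_integral_Ioc, intervalIntegral.integral_of_le zero_le_one]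
  have mem : ∀ g : ℝ → ℂ, Continuous g → MemLp g 2 (volume.restrict (Set.Ioc (0 : ℝ) 1)) := by
    intro g hg
    obtain ⟨C, hC⟩ := (isCompact_Icc (a := (0 : ℝ)) (b := 1)).exists_bound_of_continuousOn
      hg.continuousOn
    refine MemLp.of_bound hg.aestronglyMeasurable C ?_
    filter_upwards [ae_restrict_mem measurableSet_Ioc] with x hx
    exact hC x (Set.Ioc_subset_Icc_self hx)
  have s1 := hasSum_sq_fourierCoeffOn (zero_lt_one (α := ℝ)) (mem f hfc)
  have s2 := hasSum_sq_fourierCoeffOn (zero_lt_one (α := ℝ)) (mem f' hf')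
  simp only [sub_zero, inv_one, one_smul] at s1 s2
  have c0 : fourierCoeffOn (zero_lt_one (α := ℝ)) f 0 = ∫ t, f t ∂mu1 := by
    rw [fourierCoeffOn_eq_integral, conv]
    simp
  have s3 := (hasSum_ite_eq (0 : ℤ) (‖fourierCoeffOn (zero_lt_one (α := ℝ)) f 0‖ ^ 2))
  have s4 := (s1.sub s3).mul_left ((2 * π) ^ 2)
  unfold vr
  rw [conv, conv (fun t => ‖f' t‖ ^ 2), ← c0]
  refine hasSum_le (fun n => ?_) s4 s2
  by_cases hn : n = 0
  · subst hn; simp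
  · rw [if_neg hn, sub_zero, fourierCoeffOn_of_hasDerivAt zero_lt_one hn (fun x _ => hf x)
      (hf'.intervalIntegrable _ _), hp]
    have h1 : (1 : ℝ) ≤ (n : ℝ) ^ 2 := by
      have : (1 : ℤ) ≤ n ^ 2 := by
        have := pow_pos (abs_pos.2 hn) 2
        rw [sq_abs] at this
        omega
      exact_mod_cast this
    have : ‖1 / (-2 * (π : ℂ) * Complex.I * n)‖ ^ 2 = 1 / ((2 * π) ^ 2 * (n : ℝ) ^ 2) := by
      simp [abs_of_pos Real.pi_pos]
      rw [mul_pow, mul_pow, inv_pow, sq_abs]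
      ring
    simp only [sub_self, mul_zero, zero_sub, norm_mul, mul_pow, this, norm_neg]
    have hpos : 0 < (2 * π) ^ 2 := by positivity
    set A := ‖fourierCoeffOn (zero_lt_one (α := ℝ)) f' n‖ ^ 2
    have hA : 0 ≤ A := by positivity
    simp only [Complex.ofReal_one, Complex.ofReal_zero, sub_zero, norm_one, one_pow, one_mul]
    have e : (2 ^ 2 * π ^ 2) * (1 / (2 ^ 2 * π ^ 2 * (n : ℝ) ^ 2) * A) = A / (n : ℝ) ^ 2 := by
      have : (n : ℝ) ≠ 0 := by exact_mod_cast hn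
      field_simp
    rw [e]
    exact div_le_self hA h1


theorem wOf_hasSum (d : ℕ) (hw : (Fin d → ℤ) → ℝ) (hw_nonneg : ∀ k, 0 ≤ hw k)
    (hw_summable : Summable hw) (x : Fin d → ℝ) :
    HasSum (fun k => hw k * Real.cos (∑ i, (2 * π * (k i : ℝ)) * x i)) (wOf d hw x) := by
  have hs : Summable fun k : Fin d → ℤ =>
      (hw k : ℂ) * Complex.exp (Complex.I * ((∑ i, (2 * π * (k i : ℝ)) * x i : ℝ) : ℂ)) := by
    refine Summable.of_norm_bounded hw_summable fun k => ?_
    rw [norm_mul, mul_comm Complex.I, Complex.norm_exp_ofReal_mul_I, mul_one, Complex.norm_real,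
      Real.norm_eq_abs, abs_of_nonneg (hw_nonneg k)]
  have := Complex.hasSum_re hs.hasSum
  unfold wOf
  convert this using 2 with k
  rw [Complex.re_ofReal_mul, mul_comm Complex.I, Complex.exp_ofReal_mul_I_re]

theorem wOf_cont (d : ℕ) (hw : (Fin d → ℤ) → ℝ) (hw_nonneg : ∀ k, 0 ≤ hw k)
    (hw_summable : Summable hw) : Continuous (wOf d hw) := by
  have : wOf d hw = fun x => ∑' k, hw k * Real.cos (∑ i, (2 * π * (k i : ℝ)) * x i) :=
    funext fun x => (wOf_hasSum d hw hw_nonneg hw_summable x).tsum_eq.symm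
  rw [this]
  refine continuous_tsum (fun k => by fun_prop) hw_summable fun k x => ?_
  rw [norm_mul, Real.norm_eq_abs, Real.norm_eq_abs, abs_of_nonneg (hw_nonneg k)]
  exact mul_le_of_le_one_right (hw_nonneg k) (Real.abs_cos_le_one _)

theorem wOf_neg (d : ℕ) (hw : (Fin d → ℤ) → ℝ) (hw_nonneg : ∀ k, 0 ≤ hw k)
    (hw_summable : Summable hw) (x : Fin d → ℝ) : wOf d hw (-x) = wOf d hw x := by
  rw [← (wOf_hasSum d hw hw_nonneg hw_summable x).tsum_eq,
    ← (wOf_hasSum d hw hw_nonneg hw_summable (-x)).tsum_eq]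
  congr 1; ext k
  simp only [Pi.neg_apply, mul_neg, Finset.sum_neg_distrib, Real.cos_neg]

theorem pair_bound (d N : ℕ) (hw : (Fin d → ℤ) → ℝ) (hw_nonneg : ∀ k, 0 ≤ hw k)
    (hw_summable : Summable hw) (x : Fin N → Fin d → ℝ) :
    ((N : ℝ) ^ 2 * hw 0 - N * wOf d hw 0) / 2 ≤
      ∑ j : Fin N, ∑ k : Fin N, if j < k then wOf d hw (x j - x k) else 0 := by
  have h1 : HasSum (fun k => ∑ j : Fin N, ∑ l : Fin N,
      hw k * Real.cos (∑ i, (2 * π * (k i : ℝ)) * (x j - x l) i))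
      (∑ j : Fin N, ∑ l : Fin N, wOf d hw (x j - x l)) :=
    hasSum_sum fun j _ => hasSum_sum fun l _ => wOf_hasSum d hw hw_nonneg hw_summable _
  have h2 : ∀ k : Fin d → ℤ, ∑ j : Fin N, ∑ l : Fin N,
      hw k * Real.cos (∑ i, (2 * π * (k i : ℝ)) * (x j - x l) i) =
      hw k * ((∑ j : Fin N, Real.cos (∑ i, (2 * π * (k i : ℝ)) * x j i)) ^ 2 +
        (∑ j : Fin N, Real.sin (∑ i, (2 * π * (k i : ℝ)) * x j i)) ^ 2) := by
    intro k
    rw [sq, sq, Finset.sum_mul_sum, Finset.sum_mul_sum, ← Finset.sum_add_distrib, Finset.mul_sum]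
    refine Finset.sum_congr rfl fun j _ => ?_
    rw [← Finset.sum_add_distrib, Finset.mul_sum]
    refine Finset.sum_congr rfl fun l _ => ?_
    rw [← Real.cos_sub]
    simp only [Pi.sub_apply, mul_sub, Finset.sum_sub_distrib]
  have h3 : (N : ℝ) ^ 2 * hw 0 ≤ ∑ j : Fin N, ∑ l : Fin N, wOf d hw (x j - x l) := by
    have := le_hasSum h1 0 fun k _ => by
      rw [h2]; exact mul_nonneg (hw_nonneg k) (by positivity)
    rw [h2] at this
    simp at this
    linarith
  have h4 : ∑ j : Fin N, ∑ l : Fin N, wOf d hw (x j - x l) =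
      2 * (∑ j : Fin N, ∑ k : Fin N, if j < k then wOf d hw (x j - x k) else 0)
        + N * wOf d hw 0 := by
    have e : ∀ j l : Fin N, wOf d hw (x j - x l) = (if j < l then wOf d hw (x j - x l) else 0) +
        (if l < j then wOf d hw (x l - x j) else 0) + (if j = l then wOf d hw 0 else 0) := by
      intro j l
      rcases lt_trichotomy j l with h | h | h
      · simp [h, h.ne, h.not_gt]
      · subst h; simp
      · simp only [h.not_gt, h, h.ne', if_false, if_true, zero_add, add_zero]
        rw [← wOf_neg d hw hw_nonneg hw_summable, neg_sub]
    rw [Finset.sum_congr rfl fun j _ => Finset.sum_congr rfl fun l _ => e j l]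
    simp only [Finset.sum_add_distrib]
    rw [Finset.sum_comm (f := fun j l => if l < j then wOf d hw (x l - x j) else 0)]
    simp
    ring
  linarith

theorem cube1_meas (d : ℕ) :
    (volume.restrict (cube1 d)) = Measure.pi fun _ : Fin d => mu1 := by
  rw [cube1, volume_pi, Measure.restrict_pi_pi]; rfl

theorem cube_meas (d N : ℕ) :
    (volume.restrict (cube d N)) =
      Measure.pi fun _ : Fin N => Measure.pi fun _ : Fin d => mu1 := by
  rw [cube, volume_pi, Measure.restrict_pi_pi]
  congr 1; ext1 i
  exact cube1_meas d

theorem poincare1 (d : ℕ) {f : (Fin d → ℝ) → ℂ} {g : Fin d → (Fin d → ℝ) → ℂ}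
    (hf : Continuous f)
    (hg : ∀ i, Continuous (g i))
    (hd : ∀ x i t, HasDerivAt (fun t => f (Function.update x i t)) (g i (Function.update x i t)) t)
    (hper : ∀ x i, f (Function.update x i 1) = f (Function.update x i 0)) :
    (2 * π) ^ 2 * vr (Measure.pi fun _ : Fin d => mu1) f ≤
      ∑ i, ∫ x, ‖g i x‖ ^ 2 ∂(Measure.pi fun _ : Fin d => mu1) := by
  have hN := mu1_nice
  have hu : ∀ i : Fin d, Continuous fun p : (Fin d → ℝ) × ℝ => Function.update p.1 i p.2 :=
    fun i => continuous_fst.update i continuous_snd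
  refine (mul_le_mul_of_nonneg_left (efron hN d f hf) (by positivity)).trans ?_
  rw [Finset.mul_sum]
  refine Finset.sum_le_sum fun i _ => ?_
  rw [← integral_update hN i (F := fun x => ‖g i x‖ ^ 2) ((hg i).norm.pow 2), ← integral_const_mul]
  refine integral_mono (hN.pi.integrable (continuous_const.mul (vr_cont hN (hf.comp (hu i)))))
    (hN.pi.integrable (hN.cont (((hg i).comp (hu i)).norm.pow 2))) fun x => ?_
  exact wirtinger (hd x i) ((hg i).comp ((hu i).comp (by fun_prop : Continuous fun t => (x, t))))
    (hper x i)

theorem poincareN (d N : ℕ) (Ψ : (Fin N → Fin d → ℝ) → ℂ) (hΨ : IsAdmissible d N Ψ)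
    (j : Fin N) :
    (2 * π) ^ 2 * ∫ x in cube d N, ‖Qop d N j Ψ x‖ ^ 2 ≤
      ∑ i : Fin d, ∫ x in cube d N, ‖fderiv ℝ Ψ x (Pi.single j (Pi.single i 1))‖ ^ 2 := by
  obtain ⟨hsm, hper, -, -⟩ := hΨ
  have hN : NiceM (Measure.pi fun _ : Fin d => mu1) := mu1_nice.pi
  have hc : Continuous Ψ := hsm.continuous
  have hdiff : Differentiable ℝ Ψ := hsm.differentiable (by simp)
  have hu : Continuous fun p : (Fin N → Fin d → ℝ) × (Fin d → ℝ) => Function.update p.1 j p.2 :=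
    continuous_fst.update j continuous_snd
  have hg : ∀ i : Fin d, Continuous fun x => fderiv ℝ Ψ x (Pi.single j (Pi.single i 1)) :=
    fun i => (hsm.continuous_fderiv (by simp)).clm_apply continuous_const
  have hQ : Continuous (Qop d N j Ψ) := by
    unfold Qop
    rw [cube1_meas]
    exact hc.sub (hN.cont (hc.comp hu))
  rw [cube_meas, ← integral_update hN j (F := fun x => ‖Qop d N j Ψ x‖ ^ 2) (hQ.norm.pow 2)]
  have e : ∀ i : Fin d, _ := fun i => integral_update hN j
    (F := fun x => ‖fderiv ℝ Ψ x (Pi.single j (Pi.single i 1))‖ ^ 2) ((hg i).norm.pow 2)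
  rw [← Finset.sum_congr rfl fun i _ => e i, ← integral_const_mul]
  have hg2 : ∀ i : Fin d, Continuous fun x => ∫ y,
      ‖fderiv ℝ Ψ (Function.update x j y) (Pi.single j (Pi.single i 1))‖ ^ 2
        ∂(Measure.pi fun _ : Fin d => mu1) :=
    fun i => hN.cont (((hg i).comp hu).norm.pow 2)
  rw [← integral_finsetSum _ fun i _ => hN.pi.integrable (hg2 i)]
  refine integral_mono
    (hN.pi.integrable (continuous_const.mul (hN.cont ((hQ.comp hu).norm.pow 2))))
    (hN.pi.integrable (continuous_finsetSum _ fun i _ => hg2 i)) fun x => ?_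
  have hux : Continuous fun y : Fin d → ℝ => Function.update x j y :=
    hu.comp (by fun_prop : Continuous fun y => (x, y))
  simp only [Qop, Function.update_idem, cube1_meas]
  rw [vr_eq hN (f := fun y => Ψ (Function.update x j y)) (hc.comp hux)]
  refine poincare1 d (f := fun y => Ψ (Function.update x j y))
    (g := fun i y => fderiv ℝ Ψ (Function.update x j y) (Pi.single j (Pi.single i 1)))
    (hc.comp hux) (fun i => (hg i).comp hux) ?_ ?_
  · intro y i t
    have h1 : HasDerivAt (fun t => Function.update x j (Function.update y i t))
        (Pi.single j (Pi.single i 1)) t :=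
      (hasFDerivAt_update x (Function.update y i t)).comp_hasDerivAt t (hasDerivAt_update y i t)
        |>.congr_deriv (by ext a b; by_cases h : a = j <;> [subst h; skip] <;> simp [*])
    exact (hdiff _).hasFDerivAt.comp_hasDerivAt t h1
  · intro y i
    have := hper (Function.update x j (Function.update y i 0)) j (Pi.single i 1)
    rw [Function.update_idem, Function.update_self] at this
    rw [← this]
    congr 2
    ext a
    by_cases h : a = i
    · subst h; simp
    · simp [h]


/-- **A priori bound on the number of excited particles.** If an admissible `Ψ` has energy
at most `(λ/2) N (N-1) ŵ(0)`, then `⟨𝒩₊⟩_Ψ ≤ λ N (w(0) - ŵ(0)) / (2 (2π)²)`. -/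
theorem excited_particles_apriori_bound (d : ℕ) (hd : 1 ≤ d)
    (hw : (Fin d → ℤ) → ℝ) (hw_nonneg : ∀ k, 0 ≤ hw k)
    (hw_even : ∀ k, hw (-k) = hw k) (hw_summable : Summable hw)
    (N : ℕ) (hN : 2 ≤ N) (lam : ℝ) (hlam : 0 < lam)
    (Ψ : (Fin N → Fin d → ℝ) → ℂ) (hΨ : IsAdmissible d N Ψ)
    (henergy : energy d N lam (wOf d hw) Ψ ≤ lam / 2 * (N : ℝ) * ((N : ℝ) - 1) * hw 0) :
    NplusExp d N Ψ ≤ lam * (N : ℝ) * (wOf d hw 0 - hw 0) / (2 * (2 * π) ^ 2) := by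
  have hpr : IsProbabilityMeasure (volume.restrict (cube d N)) := by
    rw [cube_meas]; exact mu1_nice.pi.pi.prob
  have hni : NiceM (volume.restrict (cube d N)) := by
    rw [cube_meas]; exact mu1_nice.pi.pi
  have hsm := hΨ.1
  have hnorm := hΨ.2.2.2
  have hc : Continuous Ψ := hsm.continuous
  have hw_c := wOf_cont d hw hw_nonneg hw_summable
  have hg : ∀ (j : Fin N) (i : Fin d),
      Continuous fun x => ‖fderiv ℝ Ψ x (Pi.single j (Pi.single i 1))‖ ^ 2 :=
    fun j i => ((hsm.continuous_fderiv (by simp)).clm_apply continuous_const).norm.pow 2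
  have hK : Continuous fun x => ∑ j : Fin N, ∑ i : Fin d,
      ‖fderiv ℝ Ψ x (Pi.single j (Pi.single i 1))‖ ^ 2 :=
    continuous_finsetSum _ fun j _ => continuous_finsetSum _ fun i _ => hg j i
  have hS : Continuous fun x : Fin N → Fin d → ℝ =>
      ∑ j : Fin N, ∑ k : Fin N, if j < k then wOf d hw (x j - x k) else 0 := by
    refine continuous_finsetSum _ fun j _ => continuous_finsetSum _ fun k _ => ?_
    by_cases h : j < k
    · simp only [h, if_true]; exact hw_c.comp (by fun_prop)
    · simp only [h, if_false]; exact continuous_const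
  have hV : Continuous fun x : Fin N → Fin d → ℝ =>
      lam * (∑ j : Fin N, ∑ k : Fin N, if j < k then wOf d hw (x j - x k) else 0) * ‖Ψ x‖ ^ 2 :=
    (continuous_const.mul hS).mul (hc.norm.pow 2)
  have hkin : (2 * π) ^ 2 * NplusExp d N Ψ ≤ ∫ x in cube d N, ∑ j : Fin N, ∑ i : Fin d,
      ‖fderiv ℝ Ψ x (Pi.single j (Pi.single i 1))‖ ^ 2 := by
    rw [integral_finsetSum _ fun j _ =>
      hni.integrable (continuous_finsetSum _ fun i _ => hg j i)]
    rw [NplusExp, Finset.mul_sum]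
    refine Finset.sum_le_sum fun j _ => ?_
    rw [integral_finsetSum _ fun i _ => hni.integrable (hg j i)]
    exact poincareN d N Ψ hΨ j
  have hpot : lam * (((N : ℝ) ^ 2 * hw 0 - N * wOf d hw 0) / 2) ≤ ∫ x in cube d N,
      lam * (∑ j : Fin N, ∑ k : Fin N, if j < k then wOf d hw (x j - x k) else 0)
        * ‖Ψ x‖ ^ 2 := by
    calc lam * (((N : ℝ) ^ 2 * hw 0 - N * wOf d hw 0) / 2)
        = ∫ x in cube d N, lam * (((N : ℝ) ^ 2 * hw 0 - N * wOf d hw 0) / 2) * ‖Ψ x‖ ^ 2 := by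
          rw [integral_const_mul, hnorm, mul_one]
      _ ≤ _ := by
          refine integral_mono (hni.integrable (continuous_const.mul (hc.norm.pow 2)))
            (hni.integrable hV) fun x => ?_
          exact mul_le_mul_of_nonneg_right (mul_le_mul_of_nonneg_left
            (pair_bound d N hw hw_nonneg hw_summable x) hlam.le) (by positivity)
  rw [energy, integral_add (hni.integrable hK) (hni.integrable hV)] at henergy
  rw [le_div_iff₀ (by positivity)]
  nlinarith [hkin, hpot, henergy]
end
end
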